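/- There exist universal constants c > 0 and n₀ such that for all n ≥ n₀, r ≥ 1, real p ≥ 2, and k with n·r ≤ k ≤ n²: if a randomized t-round adaptive algorithm making k exact linear measurements per round is such that for every n×n real matrix A it outputs a matrix B of rank at most r satisfying ‖A − B‖_{S_p} ≤ 2·min{‖A − X‖_{S_p} : rank(X) ≤ r} with probability at least 99/100 (over the seed), then t ≥ c·log(n²/k)/(1 + (1/p)·log n + log log n). -/

import Mathlib

/-!
The hard inputs are `A = α u vᵀ + G`, where `u, v` are independent uniform sign vectors, `G` is a
standard Gaussian matrix and `α² n` is a constant multiple of `n ^ (2 / p)`. By averaging, it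
suffices to bound the success probability of every deterministic algorithm on this input.

Success reveals the plant. The plant has rank one, so it competes in the minimum and leaves only
`G`, whose operator norm is at most `8 √n`. Since the Schatten norm lies between the operator norm
and `n ^ (1 / p)` times the operator norm, a successful output `B` has `B v` close to `α n u`. A
fixed matrix of rank at most `n / 8` is that close to a fraction `exp (-n / 8)` of the plants only.

Each round learns little. The queries are orthonormal, also across rounds, so on a pure noise input
all responses are independent standard Gaussians, and on the planted input the transcript has an
explicit density with respect to this null law. Call the squared norm of the part of the plant that
is seen by the queries its energy. As long as the energy seen so far is at most `T`, the likelihood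
ratio has second moment at most `exp T`, and an event of prior probability `exp (-L)` has
probability at most `2 exp ((T - L) / 2)` on the planted input. For fixed queries `u vᵀ` has energy
above `τ` with prior probability at most `exp (k / (2 n) - τ / (8 n))`. Hence with high probability
the energy of `u vᵀ` in round `j` is at most `k R ^ (j + 1)`, where `R` is a constant multiple of
`n ^ (2 / p)`, and if `k R ^ (t + 1) ≤ n²` the success event is unlikely as well.

So success forces `n² < k R ^ (t + 1)`; as at least one round is needed, taking logarithms gives
the bound, even without the term `log log n`.
-/

open MeasureTheory ProbabilityTheory Matrix
open scoped ENNReal Classical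

noncomputable section

/-- Squared Euclidean norm of a finitely-indexed real vector. -/
def sqNorm {ι : Type*} [Fintype ι] (x : ι → ℝ) : ℝ := ∑ i, x i ^ 2

/-- Squared Frobenius norm of a real matrix. -/
def frobSq {m n : Type*} [Fintype m] [Fintype n] (A : Matrix m n ℝ) : ℝ :=
  ∑ i, ∑ j, A i j ^ 2

/-- Spectral (ℓ₂ operator) norm of a real matrix. -/
def specNorm {m n : Type*} [Fintype m] [Fintype n] (A : Matrix m n ℝ) : ℝ :=
  sSup ((fun x : n → ℝ => Real.sqrt (sqNorm (A.mulVec x))) '' {x | sqNorm x ≤ 1})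

/-- `i`-th largest singular value (1-based), characterized via
`σ_i(A) = min {‖A − X‖ : rank X ≤ i − 1}`. -/
def singVal {m n : Type*} [Fintype m] [Fintype n] (A : Matrix m n ℝ) (i : ℕ) : ℝ :=
  sInf {c | ∃ X : Matrix m n ℝ, X.rank ≤ i - 1 ∧ c = specNorm (A - X)}

/-- Flattening of an `n × n` matrix into a vector in `ℝ^{n²}`. -/
def vec (n : ℕ) (A : Matrix (Fin n) (Fin n) ℝ) : Fin (n * n) → ℝ :=
  fun i => A (finProdFinEquiv.symm i).1 (finProdFinEquiv.symm i).2

/-- `u ⊗ v = vec (u vᵀ) ∈ ℝ^{n²}`. -/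
def tensor {n : ℕ} (u v : Fin n → ℝ) : Fin (n * n) → ℝ :=
  vec n (Matrix.of fun i j => u i * v j)

/-- Standard Gaussian measure on `ι → ℝ`. -/
def stdGaussian (ι : Type*) [Fintype ι] : Measure (ι → ℝ) :=
  Measure.pi fun _ => gaussianReal 0 1

/-- Standard Gaussian measure on `n × n` matrices (as `Fin n → Fin n → ℝ`). -/
def stdGaussianMat (n : ℕ) : Measure (Fin n → Fin n → ℝ) :=
  Measure.pi fun _ => stdGaussian (Fin n)

/-- Query maps of a deterministic `t`-round adaptive algorithm making `k` linear
measurements per round on inputs in `ℝ^N`. -/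
def QueryMaps (N k t : ℕ) : Type :=
  (j : Fin t) → (Fin (j : ℕ) → (Fin k → ℝ)) → Matrix (Fin k) (Fin N) ℝ

namespace QueryMaps

variable {N k t : ℕ}

/-- Restriction of a round-`j` history to the first `i` rounds. -/
def prefixHist {j : Fin t} (h : Fin (j : ℕ) → Fin k → ℝ) {i : Fin t}
    (hij : (i : ℕ) < (j : ℕ)) : Fin (i : ℕ) → Fin k → ℝ :=
  fun l => h ⟨l.1, l.isLt.trans hij⟩

/-- Validity of query maps: measurability, orthonormal rows within each round, and
orthogonality across rounds along consistent histories. -/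
def Valid (Q : QueryMaps N k t) : Prop :=
  (∀ (j : Fin t) (i : Fin k) (l : Fin N), Measurable fun h => Q j h i l) ∧
  (∀ (j : Fin t) (h : Fin (j : ℕ) → Fin k → ℝ), Q j h * (Q j h)ᵀ = 1) ∧
  (∀ (j i : Fin t) (hij : (i : ℕ) < (j : ℕ)) (h : Fin (j : ℕ) → Fin k → ℝ),
      Q j h * (Q i (prefixHist h hij))ᵀ = 0)

/-- Responses of the algorithm under exact linear measurements of `a`. -/
def resp (Q : QueryMaps N k t) (a : Fin N → ℝ) (j : Fin t) : Fin k → ℝ :=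
  (Q j fun i => resp Q a ⟨i.1, i.isLt.trans j.isLt⟩).mulVec a
termination_by (j : ℕ)
decreasing_by exact i.isLt

/-- Responses of the algorithm under noisy linear measurements of `a`, with fresh
per-round noise `g`. -/
def nresp (Q : QueryMaps N k t) (a : Fin N → ℝ) (g : Fin t → Fin k → ℝ) (j : Fin t) :
    Fin k → ℝ :=
  ((Q j fun i => nresp Q a g ⟨i.1, i.isLt.trans j.isLt⟩).mulVec a) + g j
termination_by (j : ℕ)
decreasing_by exact i.isLt

/-- The `tk × N` matrix stacking all the query matrices realized along the run of the
algorithm on input `a` (exact measurements). -/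
def runMat (Q : QueryMaps N k t) (a : Fin N → ℝ) : Matrix (Fin t × Fin k) (Fin N) ℝ :=
  Matrix.of fun p l =>
    Q p.1 (fun i => resp Q a ⟨i.1, i.isLt.trans p.1.isLt⟩) p.2 l

end QueryMaps

/-- Kullback–Leibler divergence, valued in `[0, ∞]`, defined with the natural
logarithm. -/
def klDiv {Ω : Type*} [MeasurableSpace Ω] (P Q : Measure Ω) : ℝ≥0∞ :=
  if P ≪ Q ∧ Integrable (fun x => Real.log ((P.rnDeriv Q x).toReal)) P then
    ENNReal.ofReal (∫ x, Real.log ((P.rnDeriv Q x).toReal) ∂P)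
  else ⊤


/-- The rank-`r` plant `Σ_{i=1}^r uᵢ vᵢᵀ` built from the rows of `U` and `V`. -/
def plant {n r : ℕ} (U V : Fin r → Fin n → ℝ) : Matrix (Fin n) (Fin n) ℝ :=
  Matrix.of fun i j => ∑ l, U l i * V l j

/-- Schatten-`p` norm (real `p`), via the singular values. -/
def schattenNorm {n : ℕ} (p : ℝ) (A : Matrix (Fin n) (Fin n) ℝ) : ℝ :=
  (∑ i ∈ Finset.range n, singVal A (i + 1) ^ p) ^ (1 / p)

/-- Ky-Fan `p` norm: sum of the `p` largest singular values. -/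
def kyFanNorm {n : ℕ} (p : ℕ) (A : Matrix (Fin n) (Fin n) ℝ) : ℝ :=
  ∑ i ∈ Finset.range p, singVal A (i + 1)

/-! ### Squared norms -/

section Norms

variable {ι κ : Type*} [Fintype ι] [Fintype κ]

lemma sqNorm_nonneg (x : ι → ℝ) : 0 ≤ sqNorm x := Finset.sum_nonneg fun _ _ => sq_nonneg _

lemma sqNorm_eq_dotProduct (x : ι → ℝ) : sqNorm x = x ⬝ᵥ x := by
  simp only [sqNorm, dotProduct, pow_two]

lemma sqNorm_eq_norm_sq (x : ι → ℝ) : sqNorm x = ‖WithLp.toLp 2 x‖ ^ 2 := by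
  rw [EuclideanSpace.real_norm_sq_eq]; rfl

@[fun_prop]
lemma continuous_sqNorm : Continuous (sqNorm : (ι → ℝ) → ℝ) := by
  unfold sqNorm; fun_prop

lemma sqNorm_smul (c : ℝ) (x : ι → ℝ) : sqNorm (c • x) = c ^ 2 * sqNorm x := by
  simp only [sqNorm, Pi.smul_apply, smul_eq_mul, mul_pow, Finset.mul_sum]

lemma sqNorm_neg (x : ι → ℝ) : sqNorm (-x) = sqNorm x := by
  simp only [sqNorm, Pi.neg_apply, neg_sq]

lemma sqNorm_add (x y : ι → ℝ) : sqNorm (x + y) = sqNorm x + 2 * (x ⬝ᵥ y) + sqNorm y := by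
  simp only [sqNorm_eq_dotProduct, add_dotProduct, dotProduct_add, dotProduct_comm y x]; ring

lemma sqNorm_add_le (x y : ι → ℝ) : sqNorm (x + y) ≤ 2 * sqNorm x + 2 * sqNorm y := by
  have := sqNorm_nonneg (x - y)
  rw [sub_eq_add_neg, sqNorm_add, sqNorm_neg, dotProduct_neg] at this
  rw [sqNorm_add]; linarith

lemma sqNorm_mulVec (A : Matrix κ ι ℝ) (x : ι → ℝ) :
    sqNorm (A *ᵥ x) = x ⬝ᵥ ((Aᵀ * A) *ᵥ x) := by
  rw [sqNorm_eq_dotProduct, dotProduct_mulVec, vecMul_mulVec, ← dotProduct_mulVec]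

end Norms

/-! ### Exponential moments -/

/-- The exponential as an extended nonnegative real: exponential moments are stated as Lebesgue
integrals of `expENN`, which makes sense without integrability assumptions. -/
def expENN (x : ℝ) : ℝ≥0∞ := ENNReal.ofReal (Real.exp x)

section ExpENN

@[fun_prop]
lemma measurable_expENN : Measurable expENN := by unfold expENN; fun_prop

@[gcongr]
lemma expENN_le_expENN {x y : ℝ} (h : x ≤ y) : expENN x ≤ expENN y :=
  ENNReal.ofReal_le_ofReal (Real.exp_le_exp.2 h)

@[simp] lemma expENN_zero : expENN 0 = 1 := by simp [expENN]

lemma expENN_ne_zero (x : ℝ) : expENN x ≠ 0 := by simp [expENN, Real.exp_pos]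

lemma expENN_ne_top (x : ℝ) : expENN x ≠ ∞ := ENNReal.ofReal_ne_top

lemma expENN_add (x y : ℝ) : expENN (x + y) = expENN x * expENN y := by
  rw [expENN, Real.exp_add, ENNReal.ofReal_mul (Real.exp_pos x).le]; rfl

lemma expENN_sum {ι : Type*} (s : Finset ι) (f : ι → ℝ) :
    expENN (∑ i ∈ s, f i) = ∏ i ∈ s, expENN (f i) := by
  simp only [expENN]
  rw [Real.exp_sum, ENNReal.ofReal_prod_of_nonneg fun _ _ => (Real.exp_pos _).le]

lemma measure_le_expENN_mul_lintegral {α : Type*} [MeasurableSpace α] (μ : Measure α)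
    {f : α → ℝ} (hf : AEMeasurable f μ) (c : ℝ) :
    μ {x | c ≤ f x} ≤ expENN (-c) * ∫⁻ x, expENN (f x) ∂μ := by
  calc μ {x | c ≤ f x} = expENN (-c) * (expENN c * μ {x | c ≤ f x}) := by
        rw [← mul_assoc, ← expENN_add, neg_add_cancel, expENN_zero, one_mul]
    _ ≤ expENN (-c) * (expENN c * μ {x | expENN c ≤ expENN (f x)}) := by
        gcongr with x; exact expENN_le_expENN
    _ ≤ _ := by
        gcongr; exact mul_meas_ge_le_lintegral₀ (measurable_expENN.comp_aemeasurable hf) _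

end ExpENN

section Pi

variable {ι : Type*} [Fintype ι] {X : ι → Type*} [∀ i, MeasurableSpace (X i)]
  (μ : ∀ i, Measure (X i)) [∀ i, IsProbabilityMeasure (μ i)]

lemma lintegral_fintype_prod_eq_prod {f : ∀ i, X i → ℝ≥0∞} (hf : ∀ i, Measurable (f i)) :
    ∫⁻ x, ∏ i, f i (x i) ∂Measure.pi μ = ∏ i, ∫⁻ y, f i y ∂μ i := by
  have hind : iIndepFun (fun i x => f i (x i)) (Measure.pi μ) :=
    iIndepFun_pi fun i => (hf i).aemeasurable
  rw [lintegral_prod_eq_prod_lintegral_of_indepFun Finset.univ _ hind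
    fun i => (hf i).comp (measurable_pi_apply i)]
  exact Finset.prod_congr rfl fun i _ => (measurePreserving_eval μ i).lintegral_comp (hf i)

lemma pi_withDensity {f : ∀ i, X i → ℝ≥0∞} (hf : ∀ i, Measurable (f i))
    [∀ i, SigmaFinite ((μ i).withDensity (f i))] :
    Measure.pi (fun i => (μ i).withDensity (f i))
      = (Measure.pi μ).withDensity fun x => ∏ i, f i (x i) := by
  refine Measure.pi_eq fun s hs => ?_
  have hind : ∀ x : ∀ i, X i, (Set.univ.pi s).indicator (fun x => ∏ i, f i (x i)) x
      = ∏ i, (s i).indicator (f i) (x i) := fun x => by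
    by_cases hx : ∀ i, x i ∈ s i
    · simp [Set.indicator_of_mem, hx]
    · obtain ⟨i, hi⟩ := not_forall.1 hx
      rw [Set.indicator_of_notMem (by simpa using hx),
        Finset.prod_eq_zero (Finset.mem_univ i) (Set.indicator_of_notMem hi _)]
  rw [withDensity_apply _ (.univ_pi hs), ← lintegral_indicator (.univ_pi hs)]
  simp_rw [hind]
  rw [lintegral_fintype_prod_eq_prod μ fun i => (hf i).indicator (hs i)]
  exact Finset.prod_congr rfl fun i _ => by
    rw [lintegral_indicator (hs i), withDensity_apply _ (hs i)]

end Pi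

/-! ### The standard Gaussian measure -/

-- Without `_root_` the name would be ambiguous with `ProbabilityTheory.stdGaussian`.
local notation "γ" => (_root_.stdGaussian)

section Gaussian

variable {ι κ : Type*} [Fintype ι] [Fintype κ]

instance isProbabilityMeasure_stdGaussian : IsProbabilityMeasure (γ ι) :=
  inferInstanceAs (IsProbabilityMeasure (Measure.pi _))

lemma gaussianReal_eq_withDensity (c : ℝ) :
    gaussianReal c 1 = (gaussianReal 0 1).withDensity fun y => expENN (c * y - c ^ 2 / 2) := by
  rw [gaussianReal_of_var_ne_zero _ one_ne_zero, gaussianReal_of_var_ne_zero _ one_ne_zero,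
    ← withDensity_mul _ (measurable_gaussianPDF _ _) (by fun_prop)]
  congr with y
  simp only [Pi.mul_apply, gaussianPDF, gaussianPDFReal, expENN]
  rw [← ENNReal.ofReal_mul (by positivity), mul_assoc (√_)⁻¹, ← Real.exp_add]
  congr 3
  simp only [NNReal.coe_one]; ring

lemma stdGaussian_map_const_add (c : ι → ℝ) :
    (γ ι).map (c + ·) = (γ ι).withDensity fun x => expENN (c ⬝ᵥ x - sqNorm c / 2) := by
  have hmap : ∀ i, (gaussianReal 0 1).map (c i + ·)
      = (gaussianReal 0 1).withDensity fun y => expENN (c i * y - c i ^ 2 / 2) := fun i => by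
    rw [gaussianReal_map_const_add, zero_add, gaussianReal_eq_withDensity]
  have hprob : ∀ i, IsProbabilityMeasure
      ((gaussianReal 0 1).withDensity fun y => expENN (c i * y - c i ^ 2 / 2)) := fun i => by
    rw [← gaussianReal_eq_withDensity]; infer_instance
  calc (γ ι).map (c + ·) = Measure.pi fun i => (gaussianReal 0 1).map (c i + ·) := by
        have : ∀ i, SigmaFinite ((gaussianReal 0 1).map (c i + ·)) := fun i => by
          rw [hmap]; infer_instance
        rw [_root_.stdGaussian, ← Measure.pi_map_pi fun i => by fun_prop]; rfl
    _ = _ := by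
        simp_rw [hmap]
        rw [pi_withDensity _ fun i => by fun_prop]
        simp_rw [← expENN_sum, Finset.sum_sub_distrib, ← Finset.sum_div]
        rfl

/-- The finite-dimensional Cameron–Martin formula. -/
lemma lintegral_const_add_stdGaussian (c : ι → ℝ) {f : (ι → ℝ) → ℝ≥0∞} (hf : Measurable f) :
    ∫⁻ x, f (c + x) ∂γ ι = ∫⁻ x, expENN (c ⬝ᵥ x - sqNorm c / 2) * f x ∂γ ι := by
  rw [← lintegral_map hf (measurable_const_add c), stdGaussian_map_const_add,
    lintegral_withDensity_eq_lintegral_mul _ (by fun_prop) hf]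
  rfl

lemma lintegral_expENN_dotProduct_stdGaussian (c : ι → ℝ) :
    ∫⁻ x, expENN (c ⬝ᵥ x) ∂γ ι = expENN (sqNorm c / 2) := by
  have h := lintegral_const_add_stdGaussian c (f := fun _ => expENN (sqNorm c / 2)) (by fun_prop)
  simpa [← expENN_add] using h.symm

end Gaussian

section Invariance

variable {ι κ : Type*} [Fintype ι] [Fintype κ]

lemma sqNorm_mulVec_of_orthogonal [DecidableEq ι] {O : Matrix κ ι ℝ} (hO : Oᵀ * O = 1) (x : ι → ℝ) :
    sqNorm (O *ᵥ x) = sqNorm x := by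
  rw [sqNorm_mulVec, hO, one_mulVec, sqNorm_eq_dotProduct]

lemma measurePreserving_mulVec_of_orthogonal [DecidableEq ι] {O : Matrix ι ι ℝ} (hO : Oᵀ * O = 1) :
    MeasurePreserving (O *ᵥ ·) (γ ι) (γ ι) := by
  have hnorm (x : EuclideanSpace ℝ ι) : ‖O.toEuclideanLin x‖ = ‖x‖ := by
    have := sqNorm_mulVec_of_orthogonal hO x.ofLp
    rwa [sqNorm_eq_norm_sq, sqNorm_eq_norm_sq,
      sq_eq_sq₀ (norm_nonneg _) (norm_nonneg _)] at this
  let e := LinearIsometry.toLinearIsometryEquiv ⟨O.toEuclideanLin, hnorm⟩ rfl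
  have htoLp : (γ ι).map (WithLp.toLp 2)
      = ProbabilityTheory.stdGaussian (EuclideanSpace ℝ ι) := map_pi_eq_stdGaussian
  have hofLp : (ProbabilityTheory.stdGaussian (EuclideanSpace ℝ ι)).map WithLp.ofLp = γ ι := by
    rw [← htoLp, Measure.map_map (by fun_prop) (by fun_prop)]
    exact Measure.map_id
  refine ⟨by fun_prop, ?_⟩
  have hcomp : (O *ᵥ ·) = WithLp.ofLp ∘ e ∘ WithLp.toLp 2 := rfl
  rw [hcomp, ← Measure.map_map (by fun_prop) (by fun_prop),
    ← Measure.map_map (by fun_prop) (by fun_prop), htoLp, ProbabilityTheory.stdGaussian_map, hofLp]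

lemma orthogonal_fromBlocks_swap [DecidableEq ι] [DecidableEq κ] {Q : Matrix κ ι ℝ}
    (hQ : Q * Qᵀ = 1) :
    (fromBlocks 0 Q Qᵀ (1 - Qᵀ * Q))ᵀ * fromBlocks 0 Q Qᵀ (1 - Qᵀ * Q) = 1 := by
  have hproj : Qᵀ * Q * (Qᵀ * Q) = Qᵀ * Q := by
    rw [Matrix.mul_assoc, ← Matrix.mul_assoc Q, hQ, Matrix.one_mul]
  simp only [fromBlocks_transpose, fromBlocks_multiply, transpose_transpose, transpose_zero,
    transpose_sub, transpose_one, transpose_mul, ← fromBlocks_one]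
  congr 1
  · simp [hQ]
  · simp [Matrix.mul_sub, ← Matrix.mul_assoc, hQ]
  · simp [Matrix.sub_mul, Matrix.mul_assoc, hQ]
  · simp [Matrix.sub_mul, Matrix.mul_sub, hproj]

/-- Replacing the component `Q G` of a Gaussian vector `G` by an independent Gaussian vector `g`,
and vice versa, is an orthogonal transformation of the pair `(g, G)`. -/
lemma measurePreserving_swap_mulVec [DecidableEq κ] {Q : Matrix κ ι ℝ} (hQ : Q * Qᵀ = 1) :
    MeasurePreserving
      (fun z : (κ → ℝ) × (ι → ℝ) => (Q *ᵥ z.2, z.2 + Qᵀ *ᵥ (z.1 - Q *ᵥ z.2)))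
      ((γ κ).prod (γ ι)) ((γ κ).prod (γ ι)) := by
  have hsum : MeasurePreserving (MeasurableEquiv.sumPiEquivProdPi fun _ : κ ⊕ ι => ℝ)
      (γ (κ ⊕ ι)) ((γ κ).prod (γ ι)) := measurePreserving_sumPiEquivProdPi _
  have hcomp := (hsum.comp (measurePreserving_mulVec_of_orthogonal
    (orthogonal_fromBlocks_swap hQ))).comp hsum.symm
  convert hcomp using 1
  funext z
  have hl : (MeasurableEquiv.sumPiEquivProdPi fun _ : κ ⊕ ι => ℝ).symm z
      = Sum.elim z.1 z.2 := by ext (i | i) <;> rfl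
  simp only [Function.comp_apply, hl, fromBlocks_mulVec, Sum.elim_comp_inl, Sum.elim_comp_inr]
  refine Prod.ext ?_ ?_
  · change Q *ᵥ z.2 = 0 *ᵥ z.1 + Q *ᵥ z.2
    rw [zero_mulVec, zero_add]
  · change z.2 + Qᵀ *ᵥ (z.1 - Q *ᵥ z.2) = Qᵀ *ᵥ z.1 + (1 - Qᵀ * Q) *ᵥ z.2
    rw [sub_mulVec, one_mulVec, mulVec_sub, mulVec_mulVec]
    abel

end Invariance

/-! ### Quadratic exponential moments of subgaussian vectors -/

section Quadratic

variable {ι κ : Type*} [Fintype ι] [Fintype κ]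

lemma lintegral_expENN_mul_sq_gaussianReal_le {l : ℝ} (h0 : 0 ≤ l) (h1 : l ≤ 1 / 2) :
    ∫⁻ y, expENN (l * y ^ 2 / 2) ∂gaussianReal 0 1 ≤ expENN l := by
  have hdensity : ∀ y : ℝ, gaussianPDF 0 1 y * expENN (l * y ^ 2 / 2)
      = ENNReal.ofReal ((√(2 * Real.pi))⁻¹ * Real.exp (-((1 - l) / 2) * y ^ 2)) := fun y => by
    simp only [gaussianPDF, gaussianPDFReal, expENN, NNReal.coe_one, mul_one, sub_zero]
    rw [← ENNReal.ofReal_mul (by positivity), mul_assoc, ← Real.exp_add]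
    congr 3
    ring
  have hexp : 1 / (1 - l) ≤ Real.exp l ^ 2 := by
    rw [← Real.exp_nat_mul, div_le_iff₀ (by linarith)]
    have := Real.add_one_le_exp ((2 : ℕ) * l)
    push_cast at *
    nlinarith
  have hpi : (2 * Real.pi)⁻¹ * (Real.pi / ((1 - l) / 2)) = 1 / (1 - l) := by
    have : 1 - l ≠ 0 := by linarith
    field_simp
  rw [gaussianReal_of_var_ne_zero _ one_ne_zero,
    lintegral_withDensity_eq_lintegral_mul _ (measurable_gaussianPDF _ _) (by fun_prop)]
  simp_rw [Pi.mul_apply, hdensity]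
  rw [← ofReal_integral_eq_lintegral_ofReal
    ((integrable_exp_neg_mul_sq (by linarith)).const_mul _) (.of_forall fun _ => by positivity),
    integral_const_mul, integral_gaussian]
  refine ENNReal.ofReal_le_ofReal ?_
  rw [← Real.sqrt_inv, ← Real.sqrt_mul (by positivity), hpi]
  exact Real.sqrt_le_iff.2 ⟨(Real.exp_pos _).le, hexp⟩

lemma lintegral_expENN_sum_mul_sq_stdGaussian_le {l : ι → ℝ} (h0 : ∀ i, 0 ≤ l i)
    (h1 : ∀ i, l i ≤ 1 / 2) :
    ∫⁻ x, expENN ((∑ i, l i * x i ^ 2) / 2) ∂γ ι ≤ expENN (∑ i, l i) := by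
  simp_rw [Finset.sum_div, expENN_sum]
  refine (lintegral_fintype_prod_eq_prod (fun _ => gaussianReal 0 1)
    (f := fun i y => expENN (l i * y ^ 2 / 2)) fun i => by fun_prop).trans_le ?_
  exact Finset.prod_le_prod' fun i _ => lintegral_expENN_mul_sq_gaussianReal_le (h0 i) (h1 i)

lemma frobSq_nonneg (A : Matrix κ ι ℝ) : 0 ≤ frobSq A :=
  Finset.sum_nonneg fun _ _ => Finset.sum_nonneg fun _ _ => sq_nonneg _

lemma frobSq_transpose (A : Matrix κ ι ℝ) : frobSq Aᵀ = frobSq A := by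
  simp only [frobSq, transpose_apply]; exact Finset.sum_comm

lemma frobSq_eq_trace (A : Matrix κ ι ℝ) : frobSq A = (Aᵀ * A).trace := by
  rw [← frobSq_transpose]
  simp only [frobSq, trace, diag, mul_apply, transpose_apply, ← sq]

lemma frobSq_smul (c : ℝ) (A : Matrix κ ι ℝ) : frobSq (c • A) = c ^ 2 * frobSq A := by
  simp only [frobSq, Matrix.smul_apply, smul_eq_mul, mul_pow, Finset.mul_sum]

lemma exists_orthogonal_transpose_mul_self_eq_diagonal [DecidableEq ι] (A : Matrix κ ι ℝ) :
    ∃ (U : Matrix ι ι ℝ) (d : ι → ℝ), Uᵀ * U = 1 ∧ (A * U)ᵀ * (A * U) = diagonal d := by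
  have hA : (Aᵀ * A).IsHermitian := isHermitian_conjTranspose_mul_self A
  let U : Matrix ι ι ℝ := hA.eigenvectorUnitary
  have hU : Uᵀ * U = 1 := Unitary.star_mul_self_of_mem hA.eigenvectorUnitary.2
  obtain ⟨d, hspec⟩ : ∃ d, Aᵀ * A = U * diagonal d * Uᵀ :=
    ⟨hA.eigenvalues, hA.spectral_theorem.trans (Unitary.conjStarAlgAut_apply _ _)⟩
  refine ⟨U, d, hU, ?_⟩
  calc (A * U)ᵀ * (A * U) = Uᵀ * (Aᵀ * A) * U := by
        simp only [transpose_mul, Matrix.mul_assoc]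
    _ = (Uᵀ * U) * diagonal d * (Uᵀ * U) := by
        rw [hspec]; simp only [Matrix.mul_assoc]
    _ = diagonal d := by rw [hU, Matrix.one_mul, Matrix.mul_one]

lemma lintegral_expENN_sqNorm_mulVec_stdGaussian_le (A : Matrix κ ι ℝ)
    (hA : ∀ x, sqNorm (A *ᵥ x) ≤ 1 / 2 * sqNorm x) :
    ∫⁻ x, expENN (sqNorm (A *ᵥ x) / 2) ∂γ ι ≤ expENN (frobSq A) := by
  obtain ⟨U, d, hU, hdiag⟩ := exists_orthogonal_transpose_mul_self_eq_diagonal A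
  have hsq (x : ι → ℝ) : sqNorm (A *ᵥ (U *ᵥ x)) = ∑ i, d i * x i ^ 2 := by
    rw [mulVec_mulVec, sqNorm_mulVec, hdiag]
    simp only [mulVec_diagonal, dotProduct]
    exact Finset.sum_congr rfl fun i _ => by ring
  have hd (i : ι) : d i = sqNorm (A *ᵥ (U *ᵥ Pi.single i 1)) := by
    rw [hsq]; simp [Pi.single_apply]
  have hd_nonneg (i : ι) : 0 ≤ d i := (sqNorm_nonneg _).trans_eq (hd i).symm
  have hd_le (i : ι) : d i ≤ 1 / 2 := by
    rw [hd]
    refine (hA _).trans_eq ?_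
    rw [sqNorm_mulVec_of_orthogonal hU]
    simp [sqNorm, Pi.single_apply]
  have htrace : ∑ i, d i = frobSq A := by
    rw [← trace_diagonal, ← hdiag, transpose_mul, Matrix.mul_assoc, trace_mul_comm,
      Matrix.mul_assoc, Matrix.mul_assoc, mul_eq_one_comm.1 hU, Matrix.mul_one, frobSq_eq_trace]
  rw [← (measurePreserving_mulVec_of_orthogonal hU).lintegral_comp
    (f := fun x => expENN (sqNorm (A *ᵥ x) / 2)) (by fun_prop), ← htrace]
  simp_rw [hsq]
  exact lintegral_expENN_sum_mul_sq_stdGaussian_le hd_nonneg hd_le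

/-- A random vector with law `ν` is subgaussian with variance proxy one: its linear exponential
moments are at most those of a standard Gaussian vector. -/
def IsSubgaussianVec (ν : Measure (ι → ℝ)) : Prop :=
  ∀ c : ι → ℝ, ∫⁻ x, expENN (c ⬝ᵥ x) ∂ν ≤ expENN (sqNorm c / 2)

lemma dotProduct_sq_le (x y : ι → ℝ) : (x ⬝ᵥ y) ^ 2 ≤ sqNorm x * sqNorm y :=
  Finset.sum_mul_sq_le_sq_mul_sq Finset.univ x y

lemma sqNorm_transpose_mulVec_le {A : Matrix κ ι ℝ} {c : ℝ} (hc : 0 ≤ c)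
    (hA : ∀ x, sqNorm (A *ᵥ x) ≤ c * sqNorm x) (y : κ → ℝ) :
    sqNorm (Aᵀ *ᵥ y) ≤ c * sqNorm y := by
  have heq : sqNorm (Aᵀ *ᵥ y) = y ⬝ᵥ (A *ᵥ (Aᵀ *ᵥ y)) := by
    rw [sqNorm_mulVec, transpose_transpose, mulVec_mulVec]
  have hcs : sqNorm (Aᵀ *ᵥ y) * sqNorm (Aᵀ *ᵥ y) ≤ c * sqNorm y * sqNorm (Aᵀ *ᵥ y) := by
    calc sqNorm (Aᵀ *ᵥ y) * sqNorm (Aᵀ *ᵥ y) = (y ⬝ᵥ (A *ᵥ (Aᵀ *ᵥ y))) ^ 2 := by rw [← heq, sq]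
      _ ≤ sqNorm y * sqNorm (A *ᵥ (Aᵀ *ᵥ y)) := dotProduct_sq_le _ _
      _ ≤ sqNorm y * (c * sqNorm (Aᵀ *ᵥ y)) := by
        gcongr
        · exact sqNorm_nonneg y
        · exact hA _
      _ = c * sqNorm y * sqNorm (Aᵀ *ᵥ y) := by ring
  rcases (sqNorm_nonneg (Aᵀ *ᵥ y)).eq_or_lt with hzero | hpos
  · exact hzero ▸ mul_nonneg hc (sqNorm_nonneg y)
  · exact le_of_mul_le_mul_right hcs hpos

/-- The square is linearised with an auxiliary Gaussian vector `g`, as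
`exp (‖A x‖² / 2)` is the mean of `exp ⟨A x, g⟩`. -/
lemma IsSubgaussianVec.lintegral_expENN_sqNorm_mulVec_le {ν : Measure (ι → ℝ)} [SFinite ν]
    (hν : IsSubgaussianVec ν) (A : Matrix κ ι ℝ)
    (hA : ∀ x, sqNorm (A *ᵥ x) ≤ 1 / 2 * sqNorm x) :
    ∫⁻ x, expENN (sqNorm (A *ᵥ x) / 2) ∂ν ≤ expENN (frobSq A) := by
  calc ∫⁻ x, expENN (sqNorm (A *ᵥ x) / 2) ∂ν
      = ∫⁻ x, ∫⁻ g, expENN ((A *ᵥ x) ⬝ᵥ g) ∂γ κ ∂ν := by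
        simp_rw [lintegral_expENN_dotProduct_stdGaussian]
    _ = ∫⁻ g, ∫⁻ x, expENN ((Aᵀ *ᵥ g) ⬝ᵥ x) ∂ν ∂γ κ := by
        rw [lintegral_lintegral_swap (by fun_prop)]
        simp_rw [mulVec_transpose, ← dotProduct_mulVec, dotProduct_comm]
    _ ≤ ∫⁻ g, expENN (sqNorm (Aᵀ *ᵥ g) / 2) ∂γ κ := lintegral_mono fun g => hν _
    _ ≤ expENN (frobSq A) := frobSq_transpose A ▸
        lintegral_expENN_sqNorm_mulVec_stdGaussian_le Aᵀ
          (sqNorm_transpose_mulVec_le (by norm_num) hA)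

lemma IsSubgaussianVec.lintegral_expENN_mul_sqNorm_mulVec_le {ν : Measure (ι → ℝ)} [SFinite ν]
    (hν : IsSubgaussianVec ν) (A : Matrix κ ι ℝ) {c : ℝ} (hc : 0 ≤ c)
    (hA : ∀ x, c * sqNorm (A *ᵥ x) ≤ 1 / 2 * sqNorm x) :
    ∫⁻ x, expENN (c * sqNorm (A *ᵥ x) / 2) ∂ν ≤ expENN (c * frobSq A) := by
  have hsqrt (x : ι → ℝ) : sqNorm ((√c • A) *ᵥ x) = c * sqNorm (A *ᵥ x) := by
    rw [smul_mulVec, sqNorm_smul, Real.sq_sqrt hc]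
  have h := hν.lintegral_expENN_sqNorm_mulVec_le (√c • A) fun x => (hsqrt x).trans_le (hA x)
  simpa only [hsqrt, frobSq_smul, Real.sq_sqrt hc] using h

end Quadratic

/-! ### Random signs -/

/-- The law of a uniformly random sign `±1`. -/
def rademacher : Measure ℝ := (2⁻¹ : ℝ≥0∞) • (Measure.dirac 1 + Measure.dirac (-1))

/-- The law of a vector of independent uniformly random signs. -/
def signLaw (ι : Type*) [Fintype ι] : Measure (ι → ℝ) := Measure.pi fun _ => rademacher

section Signs

variable {ι : Type*} [Fintype ι]

instance isProbabilityMeasure_rademacher : IsProbabilityMeasure rademacher :=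
  ⟨by simp [rademacher, ENNReal.inv_two_add_inv_two]⟩

instance isProbabilityMeasure_signLaw : IsProbabilityMeasure (signLaw ι) :=
  inferInstanceAs (IsProbabilityMeasure (Measure.pi _))

lemma lintegral_expENN_mul_rademacher_le (c : ℝ) :
    ∫⁻ y, expENN (c * y) ∂rademacher ≤ expENN (c ^ 2 / 2) := by
  have hcosh : ∫⁻ y, expENN (c * y) ∂rademacher = ENNReal.ofReal (Real.cosh c) := by
    rw [rademacher, lintegral_smul_measure, lintegral_add_measure, lintegral_dirac,
      lintegral_dirac, expENN, expENN, ← ENNReal.ofReal_add (by positivity) (by positivity),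
      Real.cosh_eq, ENNReal.ofReal_div_of_pos two_pos, smul_eq_mul, ENNReal.div_eq_inv_mul]
    simp
  exact hcosh ▸ ENNReal.ofReal_le_ofReal (Real.cosh_le_exp_half_sq c)

lemma isSubgaussianVec_signLaw : IsSubgaussianVec (signLaw ι) := fun c => by
  simp_rw [dotProduct, sqNorm, Finset.sum_div, expENN_sum]
  refine (lintegral_fintype_prod_eq_prod (fun _ => rademacher)
    (f := fun i y => expENN (c i * y)) fun i => by fun_prop).trans_le ?_
  exact Finset.prod_le_prod' fun i _ => lintegral_expENN_mul_rademacher_le (c i)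

lemma ae_sqNorm_signLaw : ∀ᵐ x ∂signLaw ι, sqNorm x = Fintype.card ι := by
  have hsq : ∀ᵐ y ∂rademacher, y ^ 2 = 1 := by simp [rademacher, ae_add_measure_iff]
  have hall : ∀ᵐ x ∂signLaw ι, ∀ i, x i ^ 2 = 1 := ae_all_iff.2 fun i =>
    (measurePreserving_eval (fun _ : ι => rademacher) i).quasiMeasurePreserving.ae hsq
  filter_upwards [hall] with x hx
  simp [sqNorm, hx]

end Signs

/-! ### Transcripts of adaptive algorithms -/

/-- The responses of `t` rounds of `k` linear measurements each. -/
abbrev Transcript (k t : ℕ) : Type := Fin t → Fin k → ℝ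

namespace QueryMaps

variable {N k t : ℕ}

/-- The part of a transcript that is known before round `j`. -/
def hist (r : Transcript k t) (j : Fin t) : Transcript k j :=
  fun i => r (i.castLE j.isLt.le)

lemma resp_eq (Q : QueryMaps N k t) (a : Fin N → ℝ) (j : Fin t) :
    resp Q a j = Q j (hist (resp Q a) j) *ᵥ a := by
  rw [resp]; rfl

lemma eq_resp {Q : QueryMaps N k t} {a : Fin N → ℝ} {r : Transcript k t}
    (hr : ∀ j, r j = Q j (hist r j) *ᵥ a) : r = resp Q a := by
  have key (m : ℕ) (hm : m < t) : r ⟨m, hm⟩ = resp Q a ⟨m, hm⟩ := by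
    induction m using Nat.strong_induction_on with
    | _ m ih =>
      have hhist : hist r ⟨m, hm⟩ = hist (resp Q a) ⟨m, hm⟩ :=
        funext fun i => ih i i.isLt (i.isLt.trans hm)
      rw [hr, resp_eq, hhist]
  exact funext fun j => key j j.isLt

/-- The query matrix of the first round, in which nothing is known yet. -/
def fstQ (Q : QueryMaps N k (t + 1)) : Matrix (Fin k) (Fin N) ℝ := Q 0 Fin.elim0

/-- The algorithm that remains after the first response `z` has been received. -/
def tailQ (Q : QueryMaps N k (t + 1)) (z : Fin k → ℝ) : QueryMaps N k t :=
  fun j h => Q j.succ (Fin.cons z h : Transcript k (j + 1))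

/-- The first `m` rounds of an algorithm. -/
def trunc (Q : QueryMaps N k t) {m : ℕ} (hm : m ≤ t) : QueryMaps N k m :=
  fun j h => Q (j.castLE hm) h

lemma query_zero (Q : QueryMaps N k (t + 1)) (h : Transcript k (0 : Fin (t + 1))) :
    Q 0 h = fstQ Q :=
  congrArg (Q 0) (funext fun i => i.elim0)

lemma hist_cons_succ (z : Fin k → ℝ) (r : Transcript k t) (j : Fin t) :
    hist (Fin.cons z r : Transcript k (t + 1)) j.succ
      = (Fin.cons z (hist r j) : Transcript k (j + 1)) :=
  funext fun i => Fin.cases rfl (fun _ => rfl) i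

lemma resp_succ (Q : QueryMaps N k (t + 1)) (a : Fin N → ℝ) :
    resp Q a = Fin.cons (fstQ Q *ᵥ a) (resp (tailQ Q (fstQ Q *ᵥ a)) a) := by
  refine (eq_resp fun j => ?_).symm
  refine Fin.cases ?_ (fun j => ?_) j
  · exact congrArg (· *ᵥ a) (query_zero Q _).symm
  · rw [hist_cons_succ]
    exact resp_eq (tailQ Q (fstQ Q *ᵥ a)) a j

lemma resp_trunc (Q : QueryMaps N k t) {m : ℕ} (hm : m ≤ t) (a : Fin N → ℝ) :
    resp (trunc Q hm) a = fun j => resp Q a (j.castLE hm) :=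
  (eq_resp fun j => resp_eq Q a (j.castLE hm)).symm

lemma resp_add_of_orthogonal (Q : QueryMaps N k t) (a : Fin N → ℝ) {b : Fin N → ℝ}
    (hb : ∀ j h, Q j h *ᵥ b = 0) : resp Q (a + b) = resp Q a :=
  (eq_resp fun j => by rw [mulVec_add, hb, add_zero, resp_eq]).symm

/-- Joint measurability of a family of adaptive algorithms in the parameter and the history. -/
def IsMeasurableFamily {Ω : Type*} [MeasurableSpace Ω] (Qf : Ω → QueryMaps N k t) : Prop :=
  ∀ (j : Fin t) (i : Fin k) (l : Fin N), Measurable fun p : Ω × Transcript k j => Qf p.1 j p.2 i l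

/-- The squared norm of the part of `a` that is seen by the queries along the transcript `r`. -/
def energy (Q : QueryMaps N k t) (r : Transcript k t) (a : Fin N → ℝ) : ℝ :=
  ∑ j, sqNorm (Q j (hist r j) *ᵥ a)

/-- Log-likelihood ratio of a transcript `r` between the input `a + G` and the input `G`, for a
standard Gaussian `G`. -/
def logLR (Q : QueryMaps N k t) (a : Fin N → ℝ) (r : Transcript k t) : ℝ :=
  ∑ j, ((Q j (hist r j) *ᵥ a) ⬝ᵥ r j - sqNorm (Q j (hist r j) *ᵥ a) / 2)

/-- Law of the transcript when the input is a standard Gaussian vector. -/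
def nullLaw (k t : ℕ) : Measure (Transcript k t) := Measure.pi fun _ => γ (Fin k)

instance isProbabilityMeasure_nullLaw : IsProbabilityMeasure (nullLaw k t) :=
  inferInstanceAs (IsProbabilityMeasure (Measure.pi _))

section Measurability

variable {Ω α : Type*} [MeasurableSpace Ω] [MeasurableSpace α]

lemma measurable_hist (j : Fin t) : Measurable fun r : Transcript k t => hist r j := by
  unfold hist; fun_prop

lemma measurable_cons :
    Measurable fun p : (Fin k → ℝ) × Transcript k t =>
      (Fin.cons p.1 p.2 : Transcript k (t + 1)) := by
  refine measurable_pi_iff.2 fun i => Fin.cases ?_ (fun i => ?_) i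
  · simpa using measurable_fst
  · simp only [Fin.cons_succ]; fun_prop

namespace IsMeasurableFamily

variable {Qf : Ω → QueryMaps N k t} {f : α → Ω} {a : α → Fin N → ℝ} {r : α → Transcript k t}

lemma mulVec (hQ : IsMeasurableFamily Qf) (hf : Measurable f) (ha : Measurable a) (j : Fin t)
    {h : α → Transcript k j} (hh : Measurable h) :
    Measurable fun x => Qf (f x) j (h x) *ᵥ a x := by
  refine measurable_pi_iff.2 fun i => ?_
  simp only [Matrix.mulVec, dotProduct]
  exact Finset.measurable_sum _ fun l _ =>
    ((hQ j i l).comp (hf.prodMk hh)).mul ((measurable_pi_apply l).comp ha)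

lemma resp (hQ : IsMeasurableFamily Qf) (hf : Measurable f) (ha : Measurable a) :
    Measurable fun x => resp (Qf (f x)) (a x) := by
  have key (m : ℕ) (hm : m < t) : Measurable fun x => QueryMaps.resp (Qf (f x)) (a x) ⟨m, hm⟩ := by
    induction m using Nat.strong_induction_on with
    | _ m ih =>
      simp_rw [resp_eq]
      exact hQ.mulVec hf ha _ (measurable_pi_iff.2 fun i => ih i i.isLt (i.isLt.trans hm))
  exact measurable_pi_iff.2 fun j => key j j.isLt

lemma sqNorm_mulVec_hist (hQ : IsMeasurableFamily Qf) (hf : Measurable f) (ha : Measurable a)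
    (hr : Measurable r) (j : Fin t) :
    Measurable fun x => sqNorm (Qf (f x) j (hist (r x) j) *ᵥ a x) :=
  continuous_sqNorm.measurable.comp (hQ.mulVec hf ha j ((measurable_hist j).comp hr))

lemma energy (hQ : IsMeasurableFamily Qf) (hf : Measurable f) (ha : Measurable a)
    (hr : Measurable r) : Measurable fun x => energy (Qf (f x)) (r x) (a x) :=
  Finset.measurable_sum _ fun j _ => hQ.sqNorm_mulVec_hist hf ha hr j

lemma logLR (hQ : IsMeasurableFamily Qf) (hf : Measurable f) (ha : Measurable a)
    (hr : Measurable r) : Measurable fun x => logLR (Qf (f x)) (a x) (r x) := by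
  refine Finset.measurable_sum _ fun j _ =>
    .sub ?_ ((hQ.sqNorm_mulVec_hist hf ha hr j).div_const 2)
  have hq := hQ.mulVec hf ha j ((measurable_hist j).comp hr)
  exact Finset.measurable_sum _ fun i _ =>
    ((measurable_pi_apply i).comp hq).mul (by fun_prop)

end IsMeasurableFamily

lemma Valid.isMeasurableFamily {Q : QueryMaps N k t} (hQ : Q.Valid) :
    IsMeasurableFamily fun _ : Ω => Q :=
  fun j i l => (hQ.1 j i l).comp measurable_snd

lemma Valid.isMeasurableFamily_tailQ {Q : QueryMaps N k (t + 1)} (hQ : Q.Valid) :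
    IsMeasurableFamily (QueryMaps.tailQ Q) :=
  fun j i l => (hQ.1 j.succ i l).comp (measurable_cons (t := j))

end Measurability

lemma Valid.trunc {Q : QueryMaps N k t} (hQ : Q.Valid) {m : ℕ} (hm : m ≤ t) :
    (trunc Q hm).Valid :=
  ⟨fun j => hQ.1 (j.castLE hm), fun j => hQ.2.1 (j.castLE hm),
    fun j i hij => hQ.2.2 (j.castLE hm) (i.castLE hm) hij⟩

lemma Valid.tailQ {Q : QueryMaps N k (t + 1)} (hQ : Q.Valid) (z : Fin k → ℝ) :
    (tailQ Q z).Valid := by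
  refine ⟨fun j i l => (hQ.isMeasurableFamily_tailQ j i l).comp measurable_prodMk_left,
    fun j h => hQ.2.1 _ _, fun j i hij h => ?_⟩
  have hprefix : prefixHist (j := j.succ) (i := i.succ) (Fin.cons z h : Transcript k (j + 1))
      (Nat.succ_lt_succ hij) = (Fin.cons z (prefixHist h hij) : Transcript k (i + 1)) :=
    funext fun l => Fin.cases rfl (fun _ => rfl) l
  have := hQ.2.2 j.succ i.succ (Nat.succ_lt_succ hij) (Fin.cons z h : Transcript k (j + 1))
  rwa [hprefix] at this

lemma Valid.tailQ_mul_transpose_fstQ {Q : QueryMaps N k (t + 1)} (hQ : Q.Valid) (z : Fin k → ℝ)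
    (j : Fin t) (h : Transcript k j) : QueryMaps.tailQ Q z j h * (fstQ Q)ᵀ = 0 := by
  have := hQ.2.2 j.succ 0 (Nat.succ_pos _) (Fin.cons z h : Transcript k (j + 1))
  rwa [query_zero Q] at this

lemma logLR_cons (Q : QueryMaps N k (t + 1)) (a : Fin N → ℝ) (z : Fin k → ℝ)
    (r : Transcript k t) :
    logLR Q a (Fin.cons z r) = ((fstQ Q *ᵥ a) ⬝ᵥ z - sqNorm (fstQ Q *ᵥ a) / 2)
      + logLR (tailQ Q z) a r := by
  have htail (j : Fin t) : Q j.succ (hist (Fin.cons z r) j.succ) = tailQ Q z j (hist r j) :=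
    congrArg (Q j.succ) (hist_cons_succ z r j)
  simp only [logLR, Fin.sum_univ_succ, query_zero, htail, Fin.cons_zero, Fin.cons_succ]

lemma measurePreserving_cons :
    MeasurePreserving
      (fun p : (Fin k → ℝ) × Transcript k t => (Fin.cons p.1 p.2 : Transcript k (t + 1)))
      ((γ (Fin k)).prod (nullLaw k t)) (nullLaw k (t + 1)) := by
  have h : MeasurePreserving _ ((γ (Fin k)).prod (nullLaw k t)) (nullLaw k (t + 1)) :=
    (measurePreserving_piFinSuccAbove (α := fun _ : Fin (t + 1) => Fin k → ℝ)
      (fun _ => γ (Fin k)) 0).symm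
  convert h using 1
  funext p
  simp [MeasurableEquiv.piFinSuccAbove, Fin.insertNthEquiv]

/-- The component of `G` seen by the first round is independent of the rest of `G`, on which
alone the later responses depend: it may be replaced by an independent Gaussian vector. -/
lemma lintegral_resp_succ {Q : QueryMaps N k (t + 1)} (hQ : Q.Valid) (a : Fin N → ℝ)
    {f : Transcript k (t + 1) → ℝ≥0∞} (hf : Measurable f) :
    ∫⁻ G, f (resp Q (a + G)) ∂γ (Fin N)
      = ∫⁻ g, ∫⁻ G, f (Fin.cons (fstQ Q *ᵥ a + g)
          (resp (tailQ Q (fstQ Q *ᵥ a + g)) (a + G))) ∂γ (Fin N) ∂γ (Fin k) := by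
  set q := fstQ Q
  let F : (Fin k → ℝ) × (Fin N → ℝ) → ℝ≥0∞ := fun p =>
    f (Fin.cons (q *ᵥ a + p.1) (resp (tailQ Q (q *ᵥ a + p.1)) (a + p.2)))
  have hF : Measurable F := by
    refine hf.comp (measurable_cons.comp (.prodMk (by fun_prop) ?_))
    exact hQ.isMeasurableFamily_tailQ.resp (by fun_prop) (by fun_prop)
  have hmeas : Measurable fun G => resp Q (a + G) :=
    hQ.isMeasurableFamily.resp measurable_id (measurable_const_add a)
  have hresp (g : Fin k → ℝ) (G : Fin N → ℝ) :
      f (resp Q (a + G)) = F (q *ᵥ G, G + qᵀ *ᵥ (g - q *ᵥ G)) := by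
    simp only [F]
    rw [resp_succ, ← mulVec_add, ← add_assoc, resp_add_of_orthogonal (tailQ Q _) (a + G)]
    intro j h
    rw [mulVec_mulVec, hQ.tailQ_mul_transpose_fstQ, zero_mulVec]
  calc ∫⁻ G, f (resp Q (a + G)) ∂γ (Fin N)
      = ∫⁻ z, f (resp Q (a + z.2)) ∂(γ (Fin k)).prod (γ (Fin N)) :=
        (measurePreserving_snd.lintegral_comp (hf.comp hmeas)).symm
    _ = ∫⁻ z, F (q *ᵥ z.2, z.2 + qᵀ *ᵥ (z.1 - q *ᵥ z.2)) ∂(γ (Fin k)).prod (γ (Fin N)) :=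
        lintegral_congr fun z => hresp z.1 z.2
    _ = ∫⁻ z, F z ∂(γ (Fin k)).prod (γ (Fin N)) :=
        (measurePreserving_swap_mulVec (hQ.2.1 0 _)).lintegral_comp hF
    _ = _ := lintegral_prod _ hF.aemeasurable

theorem lintegral_resp_const_add {Q : QueryMaps N k t} (hQ : Q.Valid) (a : Fin N → ℝ)
    {f : Transcript k t → ℝ≥0∞} (hf : Measurable f) :
    ∫⁻ G, f (resp Q (a + G)) ∂γ (Fin N) = ∫⁻ r, expENN (logLR Q a r) * f r ∂nullLaw k t := by
  induction t with
  | zero =>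
    have hconst (r : Transcript k 0) : f r = f Fin.elim0 := congrArg f (Subsingleton.elim _ _)
    simp [hconst, logLR]
  | succ t ih =>
    set q := fstQ Q
    have hlog : Measurable fun r => expENN (logLR Q a r) * f r :=
      (measurable_expENN.comp (hQ.isMeasurableFamily.logLR measurable_id
        measurable_const measurable_id)).mul hf
    have htail : Measurable fun p : (Fin k → ℝ) × Transcript k t =>
        expENN (logLR (tailQ Q p.1) a p.2) * f (Fin.cons p.1 p.2) :=
      (measurable_expENN.comp (hQ.isMeasurableFamily_tailQ.logLR measurable_fst measurable_const
        measurable_snd)).mul (hf.comp measurable_cons)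
    calc ∫⁻ G, f (resp Q (a + G)) ∂γ (Fin N)
        = ∫⁻ g, ∫⁻ r, expENN (logLR (tailQ Q (q *ᵥ a + g)) a r) * f (Fin.cons (q *ᵥ a + g) r)
            ∂nullLaw k t ∂γ (Fin k) := by
          rw [lintegral_resp_succ hQ a hf]
          exact lintegral_congr fun g => ih (hQ.tailQ _)
            (hf.comp (measurable_cons.comp measurable_prodMk_left))
      _ = ∫⁻ z, expENN ((q *ᵥ a) ⬝ᵥ z - sqNorm (q *ᵥ a) / 2) *
            ∫⁻ r, expENN (logLR (tailQ Q z) a r) * f (Fin.cons z r)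
            ∂nullLaw k t ∂γ (Fin k) :=
          lintegral_const_add_stdGaussian (q *ᵥ a) htail.lintegral_prod_right'
      _ = ∫⁻ z, ∫⁻ r, expENN (logLR Q a (Fin.cons z r)) * f (Fin.cons z r)
            ∂nullLaw k t ∂γ (Fin k) := by
          refine lintegral_congr fun z => ?_
          rw [← lintegral_const_mul' _ _ (expENN_ne_top _)]
          simp_rw [logLR_cons, expENN_add, mul_assoc]
          rfl
      _ = ∫⁻ r, expENN (logLR Q a r) * f r ∂nullLaw k (t + 1) := by
          rw [← measurePreserving_cons.lintegral_comp hlog]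
          exact (lintegral_prod _ (hlog.comp measurable_cons).aemeasurable).symm

lemma two_mul_logLR (Q : QueryMaps N k t) (a : Fin N → ℝ) (r : Transcript k t) :
    2 * logLR Q a r = logLR Q ((2 : ℝ) • a) r + energy Q r a := by
  simp only [logLR, energy, mulVec_smul, sqNorm_smul, smul_dotProduct, smul_eq_mul,
    Finset.mul_sum, ← Finset.sum_add_distrib]
  exact Finset.sum_congr rfl fun j _ => by ring

end QueryMaps

/-! ### Change of measure from planted to null transcripts -/

namespace QueryMaps

variable {N k t : ℕ} {σ : Type*} [MeasurableSpace σ] (ν : Measure σ)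
  {Q : QueryMaps N k t} {a : σ → Fin N → ℝ} {P : Set (σ × Transcript k t)}

lemma lintegral_prod_resp_add [SFinite ν] (hQ : Q.Valid) (ha : Measurable a)
    {f : σ × Transcript k t → ℝ≥0∞} (hf : Measurable f) :
    ∫⁻ q, f (q.1, resp Q (a q.1 + q.2)) ∂ν.prod (γ (Fin N))
      = ∫⁻ p, expENN (logLR Q (a p.1) p.2) * f p ∂ν.prod (nullLaw k t) := by
  have hresp : Measurable fun q : σ × (Fin N → ℝ) => (q.1, resp Q (a q.1 + q.2)) :=
    measurable_fst.prodMk (hQ.isMeasurableFamily.resp measurable_id (by fun_prop))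
  have hlog : Measurable fun p : σ × Transcript k t => expENN (logLR Q (a p.1) p.2) :=
    measurable_expENN.comp
      (hQ.isMeasurableFamily.logLR measurable_id (ha.comp measurable_fst) measurable_snd)
  calc ∫⁻ q, f (q.1, resp Q (a q.1 + q.2)) ∂ν.prod (γ (Fin N))
      = ∫⁻ s, ∫⁻ G, f (s, resp Q (a s + G)) ∂γ (Fin N) ∂ν :=
        lintegral_prod _ (hf.comp hresp).aemeasurable
    _ = ∫⁻ s, ∫⁻ r, expENN (logLR Q (a s) r) * f (s, r) ∂nullLaw k t ∂ν :=
        lintegral_congr fun s =>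
          lintegral_resp_const_add hQ (a s) (hf.comp measurable_prodMk_left)
    _ = _ := (lintegral_prod _ (hlog.mul hf).aemeasurable).symm

lemma expENN_logLR_le_of_energy_le {b : Fin N → ℝ} {r : Transcript k t} {T : ℝ}
    (hT : energy Q r b ≤ T) (β : ℝ) :
    expENN (logLR Q b r)
      ≤ expENN β + expENN (T - β) * expENN (logLR Q ((2 : ℝ) • b) r) := by
  have htwo := two_mul_logLR Q b r
  rw [← expENN_add]
  rcases le_total (logLR Q b r) β with h | h
  · exact le_add_right (expENN_le_expENN h)
  · exact le_add_left (expENN_le_expENN (by linarith))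

/-- Where the likelihood ratio is at most `exp β`, planted transcripts are compared directly with
null ones; the rest is rare because the second moment of the likelihood ratio is at most `exp T`
while the energy seen by the queries stays below `T`. -/
lemma measure_energy_le_and_mem_le [IsProbabilityMeasure ν] (hQ : Q.Valid) (ha : Measurable a)
    (hP : MeasurableSet P) (T β : ℝ) :
    (ν.prod (γ (Fin N))) {q | energy Q (resp Q (a q.1 + q.2)) (a q.1) ≤ T ∧
        (q.1, resp Q (a q.1 + q.2)) ∈ P}
      ≤ expENN β * (ν.prod (nullLaw k t)) P + expENN (T - β) := by
  set S : Set (σ × Transcript k t) := {p | energy Q p.2 (a p.1) ≤ T} ∩ P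
  have hS : MeasurableSet S := (measurableSet_le (hQ.isMeasurableFamily.energy measurable_id
    (ha.comp measurable_fst) measurable_snd) measurable_const).inter hP
  have ha2 : Measurable fun s => (2 : ℝ) • a s := by fun_prop
  have hlog2 : Measurable fun p : σ × Transcript k t => expENN (logLR Q ((2 : ℝ) • a p.1) p.2) :=
    measurable_expENN.comp
      (hQ.isMeasurableFamily.logLR measurable_id (ha2.comp measurable_fst) measurable_snd)
  have hresp : Measurable fun q : σ × (Fin N → ℝ) => (q.1, resp Q (a q.1 + q.2)) :=
    measurable_fst.prodMk (hQ.isMeasurableFamily.resp measurable_id (by fun_prop))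
  have hpoint (p : σ × Transcript k t) : expENN (logLR Q (a p.1) p.2) * S.indicator 1 p
      ≤ expENN β * P.indicator 1 p + expENN (T - β) * expENN (logLR Q ((2 : ℝ) • a p.1) p.2) := by
    by_cases hp : p ∈ S
    · simpa [hp, hp.2] using expENN_logLR_le_of_energy_le hp.1 β
    · simp [hp]
  have hmass : ∫⁻ p, expENN (logLR Q ((2 : ℝ) • a p.1) p.2) ∂ν.prod (nullLaw k t) = 1 := by
    have := lintegral_prod_resp_add ν hQ ha2 (f := fun _ => 1) measurable_const
    simpa using this.symm
  calc _ = ∫⁻ q, S.indicator 1 (q.1, resp Q (a q.1 + q.2)) ∂ν.prod (γ (Fin N)) :=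
        (lintegral_indicator_one (hS.preimage hresp)).symm
    _ = ∫⁻ p, expENN (logLR Q (a p.1) p.2) * S.indicator 1 p ∂ν.prod (nullLaw k t) :=
        lintegral_prod_resp_add ν hQ ha (measurable_one.indicator hS)
    _ ≤ ∫⁻ p, (expENN β * P.indicator 1 p
          + expENN (T - β) * expENN (logLR Q ((2 : ℝ) • a p.1) p.2)) ∂ν.prod (nullLaw k t) :=
        lintegral_mono hpoint
    _ = expENN β * (ν.prod (nullLaw k t)) P + expENN (T - β) := by
        rw [lintegral_add_right _ (hlog2.const_mul _),
          lintegral_const_mul _ (measurable_one.indicator hP), lintegral_indicator_one hP,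
          lintegral_const_mul _ hlog2, hmass, mul_one]

lemma measure_energy_le_and_mem_le_of_forall [IsProbabilityMeasure ν] (hQ : Q.Valid)
    (ha : Measurable a) (hP : MeasurableSet P) (T : ℝ) {L : ℝ}
    (hL : ∀ r, ν {s | (s, r) ∈ P} ≤ expENN (-L)) :
    (ν.prod (γ (Fin N))) {q | energy Q (resp Q (a q.1 + q.2)) (a q.1) ≤ T ∧
        (q.1, resp Q (a q.1 + q.2)) ∈ P} ≤ 2 * expENN ((T - L) / 2) := by
  have hnull : (ν.prod (nullLaw k t)) P ≤ expENN (-L) := by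
    rw [Measure.prod_apply_symm hP]
    exact (lintegral_mono hL).trans_eq (by simp)
  calc _ ≤ expENN ((T + L) / 2) * (ν.prod (nullLaw k t)) P + expENN (T - (T + L) / 2) :=
        measure_energy_le_and_mem_le ν hQ ha hP T _
    _ ≤ expENN ((T + L) / 2) * expENN (-L) + expENN (T - (T + L) / 2) := by gcongr
    _ = 2 * expENN ((T - L) / 2) := by rw [← expENN_add, two_mul]; ring_nf

lemma exists_first_exceedance (Q : QueryMaps N k t) (τ : ℕ → ℝ) (a b : Fin N → ℝ) :
    (∃ j : Fin t, energy (trunc Q j.2.le) (resp (trunc Q j.2.le) b) a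
        ≤ ∑ i ∈ Finset.range j, τ i ∧ τ j < sqNorm (Q j (resp (trunc Q j.2.le) b) *ᵥ a)) ∨
      energy Q (resp Q b) a ≤ ∑ i ∈ Finset.range t, τ i := by
  simp only [resp_trunc, energy]
  by_cases hbad : ∃ j : Fin t, τ j < sqNorm (Q j (hist (resp Q b) j) *ᵥ a)
  · obtain ⟨j, hj, hmin⟩ := WellFounded.has_min (wellFounded_lt (α := Fin t))
      {j | τ j < sqNorm (Q j (hist (resp Q b) j) *ᵥ a)} hbad
    refine .inl ⟨j, ?_, hj⟩
    rw [← Fin.sum_univ_eq_sum_range]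
    exact Finset.sum_le_sum fun i _ => not_lt.1 fun h => hmin (i.castLE j.2.le) h i.2
  · push Not at hbad
    rw [← Fin.sum_univ_eq_sum_range]
    exact .inr (Finset.sum_le_sum fun i _ => hbad i)

/-- The planted runs are split according to the first round `j` that sees more than `τ j` of the
energy of the plant. -/
theorem measure_resp_mem_le [IsProbabilityMeasure ν] (hQ : Q.Valid) (ha : Measurable a)
    (hP : MeasurableSet P)
    {τ ℓ : ℕ → ℝ} {L : ℝ} (hτ : ∀ (j : ℕ) (q : Matrix (Fin k) (Fin N) ℝ), q * qᵀ = 1 →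
      ν {s | τ j < sqNorm (q *ᵥ a s)} ≤ expENN (-ℓ j))
    (hL : ∀ r, ν {s | (s, r) ∈ P} ≤ expENN (-L)) :
    (ν.prod (γ (Fin N))) {q | (q.1, resp Q (a q.1 + q.2)) ∈ P}
      ≤ ∑ j ∈ Finset.range t, 2 * expENN ((∑ i ∈ Finset.range j, τ i - ℓ j) / 2)
        + 2 * expENN ((∑ i ∈ Finset.range t, τ i - L) / 2) := by
  let R (j : Fin t) : Set (σ × Transcript k j) := {p | τ j < sqNorm (Q j p.2 *ᵥ a p.1)}
  have hR (j : Fin t) : MeasurableSet (R j) := measurableSet_lt measurable_const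
    (continuous_sqNorm.measurable.comp
      (hQ.isMeasurableFamily.mulVec measurable_id (ha.comp measurable_fst) j measurable_snd))
  let E (j : Fin t) : Set (σ × (Fin N → ℝ)) :=
    {q | energy (trunc Q j.2.le) (resp (trunc Q j.2.le) (a q.1 + q.2)) (a q.1)
        ≤ ∑ i ∈ Finset.range j, τ i ∧ (q.1, resp (trunc Q j.2.le) (a q.1 + q.2)) ∈ R j}
  let E' : Set (σ × (Fin N → ℝ)) :=
    {q | energy Q (resp Q (a q.1 + q.2)) (a q.1) ≤ ∑ i ∈ Finset.range t, τ i ∧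
      (q.1, resp Q (a q.1 + q.2)) ∈ P}
  calc _ ≤ (ν.prod (γ (Fin N))) ((⋃ j, E j) ∪ E') := by
        refine measure_mono fun q hq => ?_
        rcases exists_first_exceedance Q τ (a q.1) (a q.1 + q.2) with ⟨j, hj⟩ | h
        · exact .inl (Set.mem_iUnion.2 ⟨j, hj⟩)
        · exact .inr ⟨h, hq⟩
    _ ≤ ∑ j, (ν.prod (γ (Fin N))) (E j) + (ν.prod (γ (Fin N))) E' :=
        (measure_union_le _ _).trans (add_le_add_left (measure_iUnion_fintype_le _ _) _)
    _ ≤ _ := by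
        rw [← Fin.sum_univ_eq_sum_range
          (fun j => 2 * expENN ((∑ i ∈ Finset.range j, τ i - ℓ j) / 2))]
        gcongr with j
        · exact measure_energy_le_and_mem_le_of_forall ν (hQ.trunc j.2.le) ha (hR j) _
            fun r => hτ j (Q j r) (hQ.2.1 j r)
        · exact measure_energy_le_and_mem_le_of_forall ν hQ ha hP _ hL

end QueryMaps

/-! ### Anticoncentration of the planted matrix -/

section Orthonormal

variable {ι κ : Type*} [Fintype ι] [Fintype κ] {Q : Matrix κ ι ℝ}

lemma sqNorm_sub_sqNorm_mulVec_le {w : ι → ℝ} (hw : Qᵀ *ᵥ (Q *ᵥ w) = w) (z : ι → ℝ) :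
    sqNorm z - sqNorm (Q *ᵥ z) ≤ sqNorm (z - w) := by
  have hdot (y : ι → ℝ) : (Q *ᵥ y) ⬝ᵥ (Q *ᵥ w) = y ⬝ᵥ w := by
    rw [dotProduct_comm, dotProduct_mulVec, ← mulVec_transpose, hw, dotProduct_comm]
  have hpyth : sqNorm (z - w) - sqNorm (Q *ᵥ (z - w)) = sqNorm z - sqNorm (Q *ᵥ z) := by
    simp only [sqNorm_eq_dotProduct, mulVec_sub, sub_dotProduct, dotProduct_sub, hdot,
      dotProduct_comm w z, dotProduct_comm (Q *ᵥ w) (Q *ᵥ z)]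
    ring
  linarith [sqNorm_nonneg (Q *ᵥ (z - w))]

variable [DecidableEq κ]

lemma sqNorm_mulVec_le_of_orthonormal (hQ : Q * Qᵀ = 1) (x : ι → ℝ) :
    sqNorm (Q *ᵥ x) ≤ sqNorm x := by
  have hQt (z : κ → ℝ) : sqNorm (Qᵀ *ᵥ z) ≤ 1 * sqNorm z := by
    rw [one_mul]
    exact (sqNorm_mulVec_of_orthogonal (by rwa [transpose_transpose]) z).le
  simpa using sqNorm_transpose_mulVec_le zero_le_one hQt x

lemma frobSq_of_orthonormal (hQ : Q * Qᵀ = 1) : frobSq Q = Fintype.card κ := by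
  rw [frobSq_eq_trace, trace_mul_comm, hQ, trace_one]

lemma exists_orthonormal_frame_range {m : Type*} [Fintype m] (B : Matrix ι m ℝ) :
    ∃ W : Matrix (Fin B.rank) ι ℝ, W * Wᵀ = 1 ∧ ∀ y, Wᵀ *ᵥ (W *ᵥ (B *ᵥ y)) = B *ᵥ y := by
  let e : (ι → ℝ) ≃ₗ[ℝ] EuclideanSpace ℝ ι := (WithLp.linearEquiv 2 ℝ (ι → ℝ)).symm
  let S : Submodule ℝ (EuclideanSpace ℝ ι) := (LinearMap.range B.mulVecLin).map e.toLinearMap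
  have hS : Module.finrank ℝ S = B.rank := LinearEquiv.finrank_map_eq e _
  let b : OrthonormalBasis (Fin B.rank) ℝ S := (stdOrthonormalBasis ℝ S).reindex (finCongr hS)
  let W : Matrix (Fin B.rank) ι ℝ := .of fun l => (b l : EuclideanSpace ℝ ι).ofLp
  have hinner (l : Fin B.rank) (x : S) : inner ℝ (b l) x = (W *ᵥ (x : EuclideanSpace ℝ ι)) l := by
    rw [Submodule.coe_inner, EuclideanSpace.inner_eq_star_dotProduct, star_trivial,
      dotProduct_comm]
    rfl
  refine ⟨W, ?_, fun y => ?_⟩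
  · ext l m
    rw [one_apply, ← orthonormal_iff_ite.1 b.orthonormal l m, hinner]
    rfl
  · let x : S := ⟨e (B *ᵥ y), B *ᵥ y, ⟨y, rfl⟩, rfl⟩
    have hx := congrArg (fun z : S => (z : EuclideanSpace ℝ ι).ofLp) (b.sum_repr' x)
    simp only [hinner, Submodule.coe_sum, Submodule.coe_smul, WithLp.ofLp_sum,
      WithLp.ofLp_smul] at hx
    rwa [mulVec_transpose, vecMul_eq_sum]

end Orthonormal

section Tensor

variable {n : ℕ}

lemma sum_finProdFinEquiv (f : Fin (n * n) → ℝ) :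
    ∑ l, f l = ∑ i : Fin n, ∑ j : Fin n, f (finProdFinEquiv (i, j)) := by
  rw [← finProdFinEquiv.sum_comp, Fintype.sum_prod_type]

@[simp]
lemma tensor_finProdFinEquiv (u v : Fin n → ℝ) (i j : Fin n) :
    tensor u v (finProdFinEquiv (i, j)) = u i * v j := by
  simp [tensor, _root_.vec]

lemma sqNorm_tensor (u v : Fin n → ℝ) : sqNorm (tensor u v) = sqNorm u * sqNorm v := by
  simp only [sqNorm, sum_finProdFinEquiv, tensor_finProdFinEquiv, mul_pow, Finset.sum_mul_sum]

lemma continuous_tensor : Continuous fun s : (Fin n → ℝ) × (Fin n → ℝ) => tensor s.1 s.2 := by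
  unfold tensor _root_.vec
  simp only [of_apply]
  fun_prop

variable {κ : Type*}

/-- The matrix of `v ↦ Q *ᵥ tensor u v`. -/
def tensorContraction (Q : Matrix κ (Fin (n * n)) ℝ) (u : Fin n → ℝ) : Matrix κ (Fin n) ℝ :=
  .of fun l j => ∑ i, Q l (finProdFinEquiv (i, j)) * u i

/-- The matrix of `u ↦ tensorContraction Q u`, with matrices viewed as vectors of entries. -/
def tensorContractionMatrix (Q : Matrix κ (Fin (n * n)) ℝ) : Matrix (κ × Fin n) (Fin n) ℝ :=
  .of fun q i => Q q.1 (finProdFinEquiv (i, q.2))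

lemma mulVec_tensor (Q : Matrix κ (Fin (n * n)) ℝ) (u v : Fin n → ℝ) :
    Q *ᵥ tensor u v = tensorContraction Q u *ᵥ v := by
  funext l
  simp only [mulVec, dotProduct, tensorContraction, of_apply]
  rw [sum_finProdFinEquiv, Finset.sum_comm]
  refine Finset.sum_congr rfl fun j _ => ?_
  rw [Finset.sum_mul]
  exact Finset.sum_congr rfl fun i _ => by rw [tensor_finProdFinEquiv]; ring

variable [Fintype κ]

lemma frobSq_tensorContraction (Q : Matrix κ (Fin (n * n)) ℝ) (u : Fin n → ℝ) :
    frobSq (tensorContraction Q u) = sqNorm (tensorContractionMatrix Q *ᵥ u) := by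
  simp only [frobSq, sqNorm, Fintype.sum_prod_type]
  rfl

lemma frobSq_tensorContractionMatrix (Q : Matrix κ (Fin (n * n)) ℝ) :
    frobSq (tensorContractionMatrix Q) = frobSq Q := by
  simp only [frobSq, Fintype.sum_prod_type, sum_finProdFinEquiv]
  exact Finset.sum_congr rfl fun l _ => Finset.sum_comm

variable [DecidableEq κ] {Q : Matrix κ (Fin (n * n)) ℝ}

lemma sqNorm_tensorContraction_mulVec_le (hQ : Q * Qᵀ = 1) (u v : Fin n → ℝ) :
    sqNorm (tensorContraction Q u *ᵥ v) ≤ sqNorm u * sqNorm v := by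
  rw [← mulVec_tensor, ← sqNorm_tensor]
  exact sqNorm_mulVec_le_of_orthonormal hQ _

lemma sqNorm_tensorContractionMatrix_mulVec_le (hQ : Q * Qᵀ = 1) (u : Fin n → ℝ) :
    sqNorm (tensorContractionMatrix Q *ᵥ u) ≤ n * sqNorm u := by
  have hcols : frobSq (tensorContraction Q u) =
      ∑ j, sqNorm (tensorContraction Q u *ᵥ Pi.single j 1) := by
    simp only [frobSq, sqNorm, mulVec_single_one, col_apply]
    exact Finset.sum_comm
  rw [← frobSq_tensorContraction, hcols]
  calc _ ≤ ∑ j, sqNorm u * sqNorm (Pi.single j 1 : Fin n → ℝ) :=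
        Finset.sum_le_sum fun j _ => sqNorm_tensorContraction_mulVec_le hQ u _
    _ = n * sqNorm u := by simp [sqNorm, Pi.single_apply]

end Tensor

/-- The law of the two factors of the planted matrix `u vᵀ`: independent uniformly random sign
vectors. -/
def plantLaw (n : ℕ) : Measure ((Fin n → ℝ) × (Fin n → ℝ)) :=
  (signLaw (Fin n)).prod (signLaw (Fin n))

instance isProbabilityMeasure_plantLaw (n : ℕ) : IsProbabilityMeasure (plantLaw n) :=
  inferInstanceAs (IsProbabilityMeasure (Measure.prod _ _))

section Plant

variable {n : ℕ} {κ : Type*} [Fintype κ] [DecidableEq κ] {Q : Matrix κ (Fin (n * n)) ℝ}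

/-- The two factors are integrated out one after the other. -/
lemma lintegral_expENN_sqNorm_mulVec_tensor_le (hn : 0 < n) (hQ : Q * Qᵀ = 1) :
    ∫⁻ s, expENN (sqNorm (Q *ᵥ tensor s.1 s.2) / (8 * n)) ∂plantLaw n
      ≤ expENN (Fintype.card κ / (2 * n)) := by
  have hmeas : Measurable fun s : (Fin n → ℝ) × (Fin n → ℝ) =>
      expENN (sqNorm (Q *ᵥ tensor s.1 s.2) / (8 * n)) := by
    have := (continuous_tensor (n := n)).measurable
    fun_prop
  calc ∫⁻ s, expENN (sqNorm (Q *ᵥ tensor s.1 s.2) / (8 * n)) ∂plantLaw n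
      = ∫⁻ u, ∫⁻ v, expENN (1 / (4 * n) * sqNorm (tensorContraction Q u *ᵥ v) / 2)
          ∂signLaw (Fin n) ∂signLaw (Fin n) := by
        rw [plantLaw, lintegral_prod _ hmeas.aemeasurable]
        simp_rw [mulVec_tensor]
        congr! 5
        field_simp; ring
    _ ≤ ∫⁻ u, expENN (1 / (4 * n) * frobSq (tensorContraction Q u)) ∂signLaw (Fin n) := by
        refine lintegral_mono_ae ?_
        filter_upwards [ae_sqNorm_signLaw] with u hu
        refine isSubgaussianVec_signLaw.lintegral_expENN_mul_sqNorm_mulVec_le _ (by positivity)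
          fun v => ?_
        have := sqNorm_tensorContraction_mulVec_le hQ u v
        rw [hu, Fintype.card_fin] at this
        rw [one_div, inv_mul_le_iff₀ (by positivity)]
        nlinarith [sqNorm_nonneg v]
    _ = ∫⁻ u, expENN (1 / (2 * n) * sqNorm (tensorContractionMatrix Q *ᵥ u) / 2)
          ∂signLaw (Fin n) := by
        simp_rw [frobSq_tensorContraction]
        congr! 3
        field_simp; ring
    _ ≤ expENN (1 / (2 * n) * frobSq (tensorContractionMatrix Q)) := by
        refine isSubgaussianVec_signLaw.lintegral_expENN_mul_sqNorm_mulVec_le _ (by positivity)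
          fun u => ?_
        rw [one_div, inv_mul_le_iff₀ (by positivity)]
        linarith [sqNorm_tensorContractionMatrix_mulVec_le hQ u]
    _ = expENN (Fintype.card κ / (2 * n)) := by
        rw [frobSq_tensorContractionMatrix, frobSq_of_orthonormal hQ, one_div_mul_eq_div]

lemma plantLaw_lt_sqNorm_mulVec_tensor_le (hn : 0 < n) (hQ : Q * Qᵀ = 1) (τ : ℝ) :
    plantLaw n {s | τ < sqNorm (Q *ᵥ tensor s.1 s.2)}
      ≤ expENN (-(τ / (8 * n) - Fintype.card κ / (2 * n))) := by
  have htensor := (continuous_tensor (n := n)).measurable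
  calc plantLaw n {s | τ < sqNorm (Q *ᵥ tensor s.1 s.2)}
      ≤ plantLaw n {s | τ / (8 * n) ≤ sqNorm (Q *ᵥ tensor s.1 s.2) / (8 * n)} :=
        measure_mono fun s (hs : τ < _) => show τ / _ ≤ _ / _ by gcongr
    _ ≤ expENN (-(τ / (8 * n))) * expENN (Fintype.card κ / (2 * n)) := by
        refine (measure_le_expENN_mul_lintegral _ (by fun_prop) _).trans ?_
        gcongr
        exact lintegral_expENN_sqNorm_mulVec_tensor_le hn hQ
    _ = _ := by rw [← expENN_add]; ring_nf

end Plant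

section Signs

variable {ι κ : Type*} [Fintype ι] [Fintype κ] [DecidableEq κ]

lemma signLaw_sqNorm_smul_sub_le {W : Matrix κ ι ℝ} (hW : W * Wᵀ = 1) {w : ι → ℝ}
    (hw : Wᵀ *ᵥ (W *ᵥ w) = w) {c : ℝ} (hc : c ≠ 0) :
    signLaw ι {u | sqNorm (c • u - w) ≤ c ^ 2 * (Fintype.card ι / 4)}
      ≤ expENN (Fintype.card κ / 2 - 3 * Fintype.card ι / 16) := by
  have hmoment : ∫⁻ u, expENN (sqNorm (W *ᵥ u) / 4) ∂signLaw ι ≤ expENN (Fintype.card κ / 2) := by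
    have h := isSubgaussianVec_signLaw.lintegral_expENN_mul_sqNorm_mulVec_le (c := 1 / 2) W
      (by norm_num) fun x => by gcongr; exact sqNorm_mulVec_le_of_orthonormal hW x
    rw [frobSq_of_orthonormal hW] at h
    convert h using 3 <;> ring_nf
  calc _ ≤ signLaw ι {u | 3 * Fintype.card ι / 16 ≤ sqNorm (W *ᵥ u) / 4} := by
        refine measure_mono_ae ?_
        filter_upwards [ae_sqNorm_signLaw] with u hu hclose
        have hproj := (sqNorm_sub_sqNorm_mulVec_le hw (c • u)).trans hclose
        rw [mulVec_smul, sqNorm_smul, sqNorm_smul, hu, ← mul_sub] at hproj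
        have := le_of_mul_le_mul_left hproj (by positivity)
        change _ ≤ _
        linarith
    _ ≤ expENN (-(3 * Fintype.card ι / 16)) * expENN (Fintype.card κ / 2) := by
        refine (measure_le_expENN_mul_lintegral _ (by fun_prop) _).trans ?_
        gcongr
    _ = _ := by rw [← expENN_add]; ring_nf

end Signs

lemma plantLaw_sqNorm_smul_sub_mulVec_le {n : ℕ} (B : Matrix (Fin n) (Fin n) ℝ)
    (hB : 8 * B.rank ≤ n) {c E : ℝ} (hc : c ≠ 0) (hE : E ≤ c ^ 2 * (n / 4)) :
    plantLaw n {s | sqNorm (c • s.1 - B *ᵥ s.2) ≤ E} ≤ expENN (-(n / 8)) := by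
  obtain ⟨W, hW, hWB⟩ := exists_orthonormal_frame_range B
  have hmeas : MeasurableSet {s : (Fin n → ℝ) × (Fin n → ℝ) | sqNorm (c • s.1 - B *ᵥ s.2) ≤ E} :=
    measurableSet_le (by fun_prop) measurable_const
  have hfst (v : Fin n → ℝ) :
      signLaw (Fin n) {u | sqNorm (c • u - B *ᵥ v) ≤ E} ≤ expENN (-(n / 8)) := by
    calc _ ≤ signLaw (Fin n) {u | sqNorm (c • u - B *ᵥ v) ≤ c ^ 2 * (n / 4)} :=
          measure_mono fun u hu => le_trans hu hE
      _ ≤ expENN (B.rank / 2 - 3 * n / 16) := by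
          simpa using signLaw_sqNorm_smul_sub_le hW (hWB v) hc
      _ ≤ expENN (-(n / 8)) := by
          have : (8 * B.rank : ℝ) ≤ n := by exact_mod_cast hB
          gcongr
          linarith
  rw [plantLaw, Measure.prod_apply_symm hmeas]
  exact (lintegral_mono hfst).trans_eq (by simp)

/-! ### The operator norm of a Gaussian matrix -/

section SqBall

open scoped Pointwise

variable {ι κ : Type*} [Fintype ι] [Fintype κ]

/-- The closed Euclidean ball of squared radius `s`; the norm of `ι → ℝ` is the sup norm. -/
def sqBall (ι : Type*) [Fintype ι] (s : ℝ) : Set (ι → ℝ) := {x | sqNorm x ≤ s}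

lemma measurableSet_sqBall (s : ℝ) : MeasurableSet (sqBall ι s) :=
  measurableSet_le (by fun_prop) measurable_const

lemma neg_mem_sqBall {s : ℝ} {x : ι → ℝ} (hx : x ∈ sqBall ι s) : -x ∈ sqBall ι s :=
  (sqNorm_neg x).trans_le hx

lemma smul_sqBall {c : ℝ} (hc : c ≠ 0) (s : ℝ) : c • sqBall ι s = sqBall ι (c ^ 2 * s) := by
  ext x
  rw [Set.mem_smul_set_iff_inv_smul_mem₀ hc]
  change sqNorm _ ≤ s ↔ sqNorm x ≤ _
  rw [sqNorm_smul, inv_pow, inv_mul_le_iff₀ (by positivity)]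

lemma volume_sqBall_ne_top (s : ℝ) : volume (sqBall ι s) ≠ ∞ := by
  have hsub : sqBall ι s ⊆ Metric.closedBall 0 √s := fun x hx => by
    rw [mem_closedBall_zero_iff, pi_norm_le_iff_of_nonneg (Real.sqrt_nonneg s)]
    exact fun i => Real.abs_le_sqrt <| le_trans (Finset.single_le_sum (f := fun i => x i ^ 2)
      (fun _ _ => sq_nonneg _) (Finset.mem_univ i)) hx
  exact (Metric.isBounded_closedBall.subset hsub).measure_lt_top.ne

lemma volume_sqBall_ne_zero {s : ℝ} (hs : 0 < s) : volume (sqBall ι s) ≠ 0 := by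
  have hopen : IsOpen {x : ι → ℝ | sqNorm x < s} :=
    isOpen_lt continuous_sqNorm continuous_const
  have hpos := hopen.measure_pos volume ⟨0, by simpa [sqNorm] using hs⟩
  exact (hpos.trans_le (measure_mono fun x (hx : sqNorm x < s) => hx.le)).ne'

lemma volume_sqBall_one : volume (sqBall ι 1) = 2 ^ Fintype.card ι * volume (sqBall ι (1 / 4)) := by
  have h := smul_sqBall (ι := ι) (two_ne_zero (α := ℝ)) (1 / 4)
  rw [show (2 : ℝ) ^ 2 * (1 / 4) = 1 by norm_num] at h
  rw [← h, Measure.addHaar_smul]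
  simp

/-- If `A` is large at `b`, it is large at one of `b / 2 + y` and `b / 2 - y` for every `y`; this
replaces a net of the ball. -/
lemma expENN_mul_volume_sqBall_le (A : Matrix κ ι ℝ) {b : ι → ℝ} (hb : b ∈ sqBall ι 1) :
    expENN (sqNorm (A *ᵥ b) / 16) * volume (sqBall ι (1 / 4))
      ≤ 2 * ∫⁻ z in sqBall ι 1, expENN (sqNorm (A *ᵥ z) / 4) := by
  let F : (ι → ℝ) → ℝ≥0∞ := (sqBall ι 1).indicator fun z => expENN (sqNorm (A *ᵥ z) / 4)
  have hF : Measurable F := .indicator (by fun_prop) (measurableSet_sqBall 1)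
  let a := (1 / 2 : ℝ) • b
  have ha : sqNorm a ≤ 1 / 4 := by
    rw [sqNorm_smul]; linarith [show sqNorm b ≤ 1 from hb]
  have hmem (y : ι → ℝ) (hy : y ∈ sqBall ι (1 / 4)) : a + y ∈ sqBall ι 1 :=
    (sqNorm_add_le a y).trans (by linarith [show sqNorm y ≤ 1 / 4 from hy])
  calc expENN (sqNorm (A *ᵥ b) / 16) * volume (sqBall ι (1 / 4))
      = ∫⁻ _ in sqBall ι (1 / 4), expENN (sqNorm (A *ᵥ b) / 16) := (setLIntegral_const _ _).symm
    _ ≤ ∫⁻ y in sqBall ι (1 / 4), F (a + y) + F (a - y) := by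
        refine setLIntegral_mono (by fun_prop) fun y hy => ?_
        have hsum := sqNorm_add_le (A *ᵥ (a + y)) (A *ᵥ (a - y))
        rw [← mulVec_add, show a + y + (a - y) = b by simp only [a]; module] at hsum
        simp only [F, Set.indicator_of_mem (hmem y hy),
          sub_eq_add_neg, Set.indicator_of_mem (hmem (-y) (neg_mem_sqBall hy))]
        rcases le_total (sqNorm (A *ᵥ (a + y))) (sqNorm (A *ᵥ (a - y))) with h | h
        · exact le_add_left (expENN_le_expENN (by rw [← sub_eq_add_neg]; linarith))
        · exact le_add_right (expENN_le_expENN (by linarith))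
    _ ≤ ∫⁻ y, F (a + y) + F (a - y) := setLIntegral_le_lintegral _ _
    _ = 2 * ∫⁻ z in sqBall ι 1, expENN (sqNorm (A *ᵥ z) / 4) := by
        rw [lintegral_add_left (by fun_prop), lintegral_add_left_eq_self F,
          lintegral_sub_left_eq_self F, ← two_mul, lintegral_indicator (measurableSet_sqBall 1)]

end SqBall

section Gaussian

variable {n : ℕ}

/-- The square matrix whose flattening is `G`. -/
def unvec (G : Fin (n * n) → ℝ) : Matrix (Fin n) (Fin n) ℝ :=
  .of fun i j => G (finProdFinEquiv (i, j))

lemma vec_unvec (G : Fin (n * n) → ℝ) : _root_.vec n (unvec G) = G :=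
  funext fun l => congrArg G (finProdFinEquiv.apply_symm_apply l)

lemma unvec_mulVec_dotProduct (G : Fin (n * n) → ℝ) (z g : Fin n → ℝ) :
    (unvec G *ᵥ z) ⬝ᵥ g = tensor g z ⬝ᵥ G := by
  simp only [mulVec, dotProduct, sum_finProdFinEquiv, tensor_finProdFinEquiv, unvec, of_apply,
    Finset.sum_mul]
  exact Finset.sum_congr rfl fun i _ => Finset.sum_congr rfl fun j _ => by ring

lemma continuous_unvec_mulVec :
    Continuous fun q : (Fin (n * n) → ℝ) × (Fin n → ℝ) => unvec q.1 *ᵥ q.2 := by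
  unfold unvec; fun_prop

lemma lintegral_expENN_sqNorm_unvec_mulVec_le {z : Fin n → ℝ} (hz : z ∈ sqBall (Fin n) 1) :
    ∫⁻ G, expENN (sqNorm (unvec G *ᵥ z) / 4) ∂γ (Fin (n * n)) ≤ expENN (n / 2) := by
  have hmeas : Measurable fun q : (Fin (n * n) → ℝ) × (Fin n → ℝ) =>
      expENN ((√(1 / 2) • tensor q.2 z) ⬝ᵥ q.1) := by
    have : Continuous fun g => tensor g z := continuous_tensor.comp (Continuous.prodMk_left z)
    have := this.measurable
    fun_prop
  have hsq : √(1 / 2) ^ 2 = 1 / 2 := Real.sq_sqrt (by norm_num)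
  calc ∫⁻ G, expENN (sqNorm (unvec G *ᵥ z) / 4) ∂γ (Fin (n * n))
      = ∫⁻ G, ∫⁻ g, expENN ((√(1 / 2) • tensor g z) ⬝ᵥ G) ∂γ (Fin n) ∂γ (Fin (n * n)) := by
        refine lintegral_congr fun G => ?_
        simp_rw [smul_dotProduct, ← unvec_mulVec_dotProduct, ← smul_dotProduct,
          lintegral_expENN_dotProduct_stdGaussian, sqNorm_smul, hsq]
        ring_nf
    _ = ∫⁻ g, expENN (1 / 2 * (sqNorm g * sqNorm z) / 2) ∂γ (Fin n) := by
        rw [lintegral_lintegral_swap hmeas.aemeasurable]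
        simp_rw [lintegral_expENN_dotProduct_stdGaussian, sqNorm_smul, sqNorm_tensor, hsq]
    _ ≤ ∫⁻ g, expENN ((∑ i, 1 / 2 * g i ^ 2) / 2) ∂γ (Fin n) := by
        gcongr with g
        rw [← Finset.mul_sum]
        gcongr
        exact mul_le_of_le_one_right (sqNorm_nonneg g) hz
    _ ≤ expENN (∑ _ : Fin n, 1 / 2) :=
        lintegral_expENN_sum_mul_sq_stdGaussian_le (fun _ => by norm_num) fun _ => le_rfl
    _ = expENN (n / 2) := by simp [div_eq_mul_inv]

lemma stdGaussian_exists_lt_sqNorm_unvec_mulVec_le (T : ℝ) :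
    γ (Fin (n * n)) {G | ∃ b ∈ sqBall (Fin n) 1, T < sqNorm (unvec G *ᵥ b)}
      ≤ 2 ^ (n + 1) * expENN (n / 2 - T / 16) := by
  have hmeas : Measurable fun q : (Fin (n * n) → ℝ) × (Fin n → ℝ) =>
      expENN (sqNorm (unvec q.1 *ᵥ q.2) / 4) := by
    have := (continuous_unvec_mulVec (n := n)).measurable
    fun_prop
  let Φ (G : Fin (n * n) → ℝ) := ∫⁻ z in sqBall (Fin n) 1, expENN (sqNorm (unvec G *ᵥ z) / 4)
  have hΦ : ∫⁻ G, Φ G ∂γ (Fin (n * n)) ≤ expENN (n / 2) * volume (sqBall (Fin n) 1) := by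
    rw [lintegral_lintegral_swap hmeas.aemeasurable, ← setLIntegral_const]
    exact setLIntegral_mono measurable_const fun z hz =>
      lintegral_expENN_sqNorm_unvec_mulVec_le hz
  let V := volume (sqBall (Fin n) (1 / 4))
  have hV : V ≠ 0 := volume_sqBall_ne_zero (by norm_num)
  calc γ (Fin (n * n)) {G | ∃ b ∈ sqBall (Fin n) 1, T < sqNorm (unvec G *ᵥ b)}
      ≤ γ (Fin (n * n)) {G | expENN (T / 16) * V ≤ 2 * Φ G} := by
        refine measure_mono fun G ⟨b, hb, hG⟩ => le_trans ?_ (expENN_mul_volume_sqBall_le _ hb)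
        gcongr
    _ ≤ (∫⁻ G, 2 * Φ G ∂γ (Fin (n * n))) / (expENN (T / 16) * V) :=
        meas_ge_le_lintegral_div (hmeas.lintegral_prod_right'.const_mul 2).aemeasurable
          (mul_ne_zero (expENN_ne_zero _) hV)
          (ENNReal.mul_ne_top (expENN_ne_top _) (volume_sqBall_ne_top _))
    _ ≤ 2 * (expENN (n / 2) * (2 ^ n * V)) / (expENN (T / 16) * V) := by
        rw [lintegral_const_mul _ hmeas.lintegral_prod_right']
        gcongr
        rwa [volume_sqBall_one, Fintype.card_fin] at hΦ
    _ ≤ 2 ^ (n + 1) * expENN (n / 2 - T / 16) := by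
        refine ENNReal.div_le_of_le_mul (le_of_eq ?_)
        rw [show (n / 2 : ℝ) = n / 2 - T / 16 + T / 16 by ring, expENN_add, add_sub_cancel_right]
        ring

end Gaussian

/-! ### Spectral and Schatten norms -/

lemma eq_zero_of_rank_eq_zero {ι κ : Type*} [Fintype ι] {A : Matrix κ ι ℝ}
    (hA : A.rank = 0) : A = 0 := by
  rw [Matrix.rank, Submodule.finrank_eq_zero, LinearMap.range_eq_bot] at hA
  ext i j
  simpa using congrFun (LinearMap.congr_fun hA (Pi.single j 1)) i

section SpecNorm

variable {ι κ : Type*} [Fintype ι] [Fintype κ] (A : Matrix κ ι ℝ)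

lemma sqNorm_mulVec_le_frobSq_mul (x : ι → ℝ) : sqNorm (A *ᵥ x) ≤ frobSq A * sqNorm x := by
  rw [frobSq, Finset.sum_mul]
  exact Finset.sum_le_sum fun i _ => dotProduct_sq_le (A i) x

lemma bddAbove_specNorm :
    BddAbove ((fun x => √(sqNorm (A *ᵥ x))) '' {x | sqNorm x ≤ 1}) := by
  refine ⟨√(frobSq A), ?_⟩
  rintro _ ⟨x, hx, rfl⟩
  exact Real.sqrt_le_sqrt ((sqNorm_mulVec_le_frobSq_mul A x).trans
    (mul_le_of_le_one_right (frobSq_nonneg A) hx))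

lemma specNorm_nonneg : 0 ≤ specNorm A :=
  Real.sSup_nonneg (by rintro _ ⟨x, -, rfl⟩; exact Real.sqrt_nonneg _)

variable {A} in
lemma specNorm_le {c : ℝ} (hc : 0 ≤ c) (h : ∀ b ∈ sqBall ι 1, sqNorm (A *ᵥ b) ≤ c ^ 2) :
    specNorm A ≤ c := by
  refine Real.sSup_le ?_ hc
  rintro _ ⟨x, hx, rfl⟩
  exact Real.sqrt_le_iff.2 ⟨hc, h x hx⟩

lemma sqNorm_mulVec_le_specNorm_sq_mul (x : ι → ℝ) :
    sqNorm (A *ᵥ x) ≤ specNorm A ^ 2 * sqNorm x := by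
  rcases (sqNorm_nonneg x).eq_or_lt with hx | hx
  · simpa [← hx] using sqNorm_mulVec_le_frobSq_mul A x
  · have hc : (√(sqNorm x))⁻¹ ^ 2 = (sqNorm x)⁻¹ := by rw [inv_pow, Real.sq_sqrt hx.le]
    have hunit : sqNorm ((√(sqNorm x))⁻¹ • x) ≤ 1 := by
      rw [sqNorm_smul, hc, inv_mul_cancel₀ hx.ne']
    have hsup := (Real.sqrt_le_iff.1 (le_csSup (bddAbove_specNorm A) ⟨_, hunit, rfl⟩)).2
    rw [mulVec_smul, sqNorm_smul, hc, inv_mul_le_iff₀ hx, mul_comm] at hsup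
    exact hsup

@[simp] lemma specNorm_zero : specNorm (0 : Matrix κ ι ℝ) = 0 :=
  (specNorm_le le_rfl fun b _ => by simp [sqNorm]).antisymm (specNorm_nonneg _)

variable {A} in
lemma eq_zero_of_specNorm_eq_zero (hA : specNorm A = 0) : A = 0 := by
  ext i j
  have h := sqNorm_mulVec_le_specNorm_sq_mul A (Pi.single j 1)
  rw [hA, zero_pow two_ne_zero, zero_mul, mulVec_single_one] at h
  have hij := (Finset.single_le_sum (fun i _ => sq_nonneg (A.col j i)) (Finset.mem_univ i)).trans h
  exact pow_eq_zero_iff two_ne_zero |>.1 (hij.antisymm (sq_nonneg _))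

lemma singVal_nonneg (i : ℕ) : 0 ≤ singVal A i :=
  Real.sInf_nonneg (by rintro _ ⟨X, -, rfl⟩; exact specNorm_nonneg _)

lemma singVal_le_specNorm (i : ℕ) : singVal A i ≤ specNorm A :=
  csInf_le ⟨0, by rintro _ ⟨X, -, rfl⟩; exact specNorm_nonneg _⟩ ⟨0, by simp, by simp⟩

lemma singVal_one : singVal A 1 = specNorm A := by
  refine (singVal_le_specNorm A 1).antisymm (le_csInf ⟨_, 0, by simp, rfl⟩ ?_)
  rintro _ ⟨X, hX, rfl⟩
  rw [eq_zero_of_rank_eq_zero (Nat.le_zero.1 hX), sub_zero]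

end SpecNorm

lemma stdGaussian_lt_specNorm_unvec_le (n : ℕ) {c : ℝ} (hc : 0 ≤ c) :
    γ (Fin (n * n)) {G | c < specNorm (unvec G)} ≤ 2 ^ (n + 1) * expENN (n / 2 - c ^ 2 / 16) := by
  refine (measure_mono fun G (hG : c < _) => ?_).trans
    (stdGaussian_exists_lt_sqNorm_unvec_mulVec_le (c ^ 2))
  change ∃ b ∈ sqBall (Fin n) 1, _ < _
  contrapose! hG
  exact specNorm_le hc hG

section Schatten

variable {n : ℕ} (A : Matrix (Fin n) (Fin n) ℝ)

lemma schattenNorm_nonneg (p : ℝ) : 0 ≤ schattenNorm p A :=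
  Real.rpow_nonneg (Finset.sum_nonneg fun _ _ => Real.rpow_nonneg (singVal_nonneg _ _) _) _

variable {p : ℝ} (hp : 0 < p)
include hp

lemma specNorm_le_schattenNorm (hn : 0 < n) : specNorm A ≤ schattenNorm p A := by
  have hle : specNorm A ^ p ≤ ∑ i ∈ Finset.range n, singVal A (i + 1) ^ p := by
    simpa [singVal_one] using Finset.single_le_sum (f := fun i => singVal A (i + 1) ^ p)
      (fun _ _ => Real.rpow_nonneg (singVal_nonneg _ _) _) (Finset.mem_range.2 hn)
  rw [schattenNorm, one_div]
  exact (Real.le_rpow_inv_iff_of_pos (specNorm_nonneg A)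
    ((Real.rpow_nonneg (specNorm_nonneg A) p).trans hle) hp).2 hle

lemma schattenNorm_le_rpow_mul_specNorm : schattenNorm p A ≤ n ^ (1 / p) * specNorm A := by
  have hle : ∑ i ∈ Finset.range n, singVal A (i + 1) ^ p ≤ n * specNorm A ^ p := by
    refine (Finset.sum_le_sum fun i _ => Real.rpow_le_rpow (singVal_nonneg _ _)
      (singVal_le_specNorm A _) hp.le).trans ?_
    simp
  calc schattenNorm p A ≤ (n * specNorm A ^ p) ^ (1 / p) := by
        refine Real.rpow_le_rpow ?_ hle (by positivity)
        exact Finset.sum_nonneg fun _ _ => Real.rpow_nonneg (singVal_nonneg _ _) _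
    _ = n ^ (1 / p) * specNorm A := by
        rw [Real.mul_rpow n.cast_nonneg (Real.rpow_nonneg (specNorm_nonneg A) p),
          ← Real.rpow_mul (specNorm_nonneg A), mul_one_div_cancel hp.ne', Real.rpow_one]

end Schatten

/-- `B` is a rank-`r` approximation of `A` in the Schatten-`p` norm that is optimal up to the
factor `C`. -/
def IsNearOptimal {n : ℕ} (C : ℝ) (r : ℕ) (p : ℝ) (A B : Matrix (Fin n) (Fin n) ℝ) : Prop :=
  B.rank ≤ r ∧ schattenNorm p (A - B) ≤ C * sInf {c | ∃ X : Matrix (Fin n) (Fin n) ℝ,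
    X.rank ≤ r ∧ c = schattenNorm p (A - X)}

namespace IsNearOptimal

variable {n r : ℕ} {C p : ℝ} {A B X : Matrix (Fin n) (Fin n) ℝ}

lemma specNorm_sub_le (h : IsNearOptimal C r p A B) (hC : 0 ≤ C) (hp : 0 < p) (hn : 0 < n)
    (hX : X.rank ≤ r) : specNorm (A - B) ≤ C * (n ^ (1 / p) * specNorm (A - X)) :=
  calc specNorm (A - B) ≤ schattenNorm p (A - B) := specNorm_le_schattenNorm _ hp hn
    _ ≤ C * schattenNorm p (A - X) := h.2.trans <| mul_le_mul_of_nonneg_left (csInf_le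
        ⟨0, by rintro _ ⟨X, -, rfl⟩; exact schattenNorm_nonneg _ _⟩ ⟨X, hX, rfl⟩) hC
    _ ≤ C * (n ^ (1 / p) * specNorm (A - X)) := by
        gcongr; exact schattenNorm_le_rpow_mul_specNorm _ hp

lemma eq_of_rank_le (h : IsNearOptimal C r p A B) (hC : 0 ≤ C) (hp : 0 < p) (hn : 0 < n)
    (hA : A.rank ≤ r) : B = A := by
  have hle := h.specNorm_sub_le hC hp hn hA
  rw [sub_self, specNorm_zero, mul_zero, mul_zero] at hle
  exact (sub_eq_zero.1 (eq_zero_of_specNorm_eq_zero (hle.antisymm (specNorm_nonneg _)))).symm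

/-- The competitor `X` only leaves the noise `Z`. -/
lemma sqNorm_mulVec_sub_le {Z : Matrix (Fin n) (Fin n) ℝ} (h : IsNearOptimal C r p (X + Z) B)
    (hC : 0 ≤ C) (hp : 0 < p) (hn : 0 < n) (hX : X.rank ≤ r) (v : Fin n → ℝ) :
    sqNorm (X *ᵥ v - B *ᵥ v)
      ≤ 2 * (C ^ 2 + 1) * n ^ (2 / p) * (specNorm Z ^ 2 * sqNorm v) := by
  have hrpow : ((n : ℝ) ^ (1 / p)) ^ 2 = n ^ (2 / p) := by
    rw [← Real.rpow_natCast, ← Real.rpow_mul n.cast_nonneg]; congr 1; push_cast; ring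
  have hrpow_ge : 1 ≤ (n : ℝ) ^ (2 / p) :=
    Real.one_le_rpow (by exact_mod_cast hn) (by positivity)
  have hspec : specNorm (X + Z - B) ^ 2 ≤ C ^ 2 * n ^ (2 / p) * specNorm Z ^ 2 := by
    have hle := h.specNorm_sub_le hC hp hn hX
    rw [add_sub_cancel_left] at hle
    calc specNorm (X + Z - B) ^ 2 ≤ (C * (n ^ (1 / p) * specNorm Z)) ^ 2 :=
          pow_le_pow_left₀ (specNorm_nonneg _) hle 2
      _ = C ^ 2 * n ^ (2 / p) * specNorm Z ^ 2 := by rw [← hrpow]; ring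
  have hv := sqNorm_nonneg v
  calc sqNorm (X *ᵥ v - B *ᵥ v) = sqNorm ((X + Z - B) *ᵥ v + -(Z *ᵥ v)) := by
        rw [sub_mulVec, add_mulVec]; congr 1; abel
    _ ≤ 2 * (specNorm (X + Z - B) ^ 2 * sqNorm v) + 2 * (specNorm Z ^ 2 * sqNorm v) := by
        refine (sqNorm_add_le _ _).trans ?_
        rw [sqNorm_neg]
        gcongr <;> exact sqNorm_mulVec_le_specNorm_sq_mul _ _
    _ ≤ 2 * (C ^ 2 * n ^ (2 / p) * specNorm Z ^ 2 * sqNorm v)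
          + 2 * (n ^ (2 / p) * (specNorm Z ^ 2 * sqNorm v)) := by
        have := le_mul_of_one_le_left (mul_nonneg (sq_nonneg (specNorm Z)) hv) hrpow_ge
        gcongr
    _ = 2 * (C ^ 2 + 1) * n ^ (2 / p) * (specNorm Z ^ 2 * sqNorm v) := by ring

end IsNearOptimal

/-! ### The round lower bound -/

section Constants

lemma two_pow_le_expENN (m : ℕ) : 2 ^ m ≤ expENN m := by
  have htwo : (2 : ℝ≥0∞) ≤ expENN 1 := by
    rw [expENN, ← ENNReal.ofReal_ofNat]
    exact ENNReal.ofReal_le_ofReal Real.exp_one_gt_two.le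
  calc (2 : ℝ≥0∞) ^ m ≤ expENN 1 ^ m := by gcongr
    _ = expENN m := by
      rw [expENN, ← ENNReal.ofReal_pow (Real.exp_pos 1).le, ← Real.exp_nat_mul, mul_one]; rfl

lemma expENN_neg_natCast_le (m : ℕ) : expENN (-m) ≤ 2⁻¹ ^ m := by
  rw [← ENNReal.inv_pow, ENNReal.le_inv_iff_mul_le]
  calc expENN (-m) * 2 ^ m ≤ expENN (-m) * expENN m := by gcongr; exact two_pow_le_expENN m
    _ = 1 := by rw [← expENN_add, neg_add_cancel, expENN_zero]

lemma sum_expENN_neg_add_one_le (t : ℕ) : ∑ j ∈ Finset.range t, expENN (-(j + 1)) ≤ 1 := by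
  calc ∑ j ∈ Finset.range t, expENN (-(j + 1)) ≤ ∑ j ∈ Finset.range t, 2⁻¹ ^ (j + 1) := by
        gcongr with j; exact_mod_cast expENN_neg_natCast_le (j + 1)
    _ ≤ ∑' j : ℕ, (2⁻¹ : ℝ≥0∞) ^ (j + 1) := ENNReal.sum_le_tsum _
    _ = 1 := by
      rw [ENNReal.tsum_geometric_add_one, ENNReal.one_sub_inv_two, inv_inv,
        ENNReal.inv_mul_cancel two_ne_zero ENNReal.ofNat_ne_top]

lemma five_mul_expENN_neg_four_lt : 5 * expENN (-4) < 1 / 2 := by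
  calc 5 * expENN (-4) ≤ 5 * 2⁻¹ ^ 4 := by gcongr; exact_mod_cast expENN_neg_natCast_le 4
    _ < 1 / 2 := by
      rw [← ENNReal.toReal_lt_toReal (by finiteness) (by finiteness)]
      norm_num

lemma sum_pow_succ_le {R : ℝ} (hR : 2 ≤ R) (j : ℕ) :
    ∑ i ∈ Finset.range j, R ^ (i + 1) ≤ 2 * R ^ j := by
  induction j with
  | zero => simp
  | succ j ih =>
    rw [Finset.sum_range_succ, pow_succ]
    nlinarith [show 0 ≤ R ^ j by positivity]

end Constants

/-- The low-rank matrix `B` recovers the plant `α u vᵀ` with sign vectors `u` and `v`: it maps `v`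
to at most half the distance of `α u vᵀ v = α n u` from the origin. -/
def RecoversPlant {n : ℕ} (r : ℕ) (α : ℝ) (u v : Fin n → ℝ) (B : Matrix (Fin n) (Fin n) ℝ) :
    Prop :=
  B.rank ≤ r ∧ sqNorm ((α * n) • u - B *ᵥ v) ≤ (α * n) ^ 2 * (n / 4)

section RecoversPlant

variable {n r : ℕ} {α : ℝ}

lemma plantLaw_recoversPlant_le (hr : 8 * r ≤ n) (hn : 0 < n) (hα : α ≠ 0)
    (B : Matrix (Fin n) (Fin n) ℝ) :
    plantLaw n {s | RecoversPlant r α s.1 s.2 B} ≤ expENN (-(n / 8)) := by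
  by_cases hB : B.rank ≤ r
  · exact (measure_mono fun s hs => hs.2).trans <| plantLaw_sqNorm_smul_sub_mulVec_le B (by omega)
      (mul_ne_zero hα (by exact_mod_cast hn.ne')) le_rfl
  · simp [RecoversPlant, hB]

lemma isClosed_rank_le (m : Type*) [Fintype m] (r : ℕ) :
    IsClosed {M : Matrix m m ℝ | M.rank ≤ r} := by
  let e : Matrix m m ℝ →ₗ[ℝ] (m → ℝ) →L[ℝ] (m → ℝ) :=
    LinearMap.toContinuousLinearMap.toLinearMap ∘ₗ (Matrix.toLin' (R := ℝ)).toLinearMap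
  have hrank (M : Matrix m m ℝ) : LinearMap.rank (e M).toLinearMap = M.rank := by
    rw [Matrix.rank, Module.finrank_eq_rank]
    rfl
  have hopen := (isOpen_setOfPred_nat_le_rank (r + 1)).preimage
    (LinearMap.continuous_of_finiteDimensional e)
  convert hopen.isClosed_compl using 1
  ext M
  simp only [Set.mem_compl_iff, Set.mem_preimage, Set.mem_ofPred_eq, hrank, Nat.cast_le,
    Nat.succ_le_iff, not_lt]

lemma measurableSet_recoversPlant {X : Type*} [MeasurableSpace X] {u v : X → Fin n → ℝ}
    {B : X → Matrix (Fin n) (Fin n) ℝ} (hu : Measurable u) (hv : Measurable v)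
    (hB : ∀ i j, Measurable fun x => B x i j) :
    MeasurableSet {x | RecoversPlant r α (u x) (v x) (B x)} := by
  have hrank : MeasurableSet {x | (B x).rank ≤ r} := by
    have hB' : Measurable (fun x i j => B x i j : X → Fin n → Fin n → ℝ) :=
      measurable_pi_iff.2 fun i => measurable_pi_iff.2 (hB i)
    have hclosed : IsClosed {M : Fin n → Fin n → ℝ | (of M).rank ≤ r} :=
      isClosed_rank_le (Fin n) r
    exact hB' hclosed.measurableSet
  have hBv : Measurable fun x => B x *ᵥ v x := by
    refine measurable_pi_iff.2 fun i => ?_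
    simp only [mulVec, dotProduct]
    exact Finset.measurable_sum _ fun j _ => (hB i j).mul ((measurable_pi_apply j).comp hv)
  have hdist : MeasurableSet
      {x | sqNorm ((α * n) • u x - B x *ᵥ v x) ≤ (α * n) ^ 2 * (n / 4)} :=
    measurableSet_le (continuous_sqNorm.measurable.comp ((hu.const_smul (α * n)).sub hBv))
      measurable_const
  exact hrank.inter hdist

lemma unvec_smul_tensor (α : ℝ) (u v : Fin n → ℝ) :
    unvec (α • tensor u v) = vecMulVec (α • u) v := by
  ext i j
  simp [unvec, vecMulVec_apply, mul_assoc]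

lemma IsNearOptimal.recoversPlant {C p : ℝ} {u v : Fin n → ℝ} {G : Fin (n * n) → ℝ}
    {B : Matrix (Fin n) (Fin n) ℝ} (h : IsNearOptimal C r p (unvec (α • tensor u v + G)) B)
    (hC : 0 ≤ C) (hp : 0 < p) (hn : 0 < n) (hr : 1 ≤ r) (hv : sqNorm v = n)
    (hG : specNorm (unvec G) ≤ 8 * √n)
    (hα : α ^ 2 * (64 * n) = 32768 * (C ^ 2 + 1) * n ^ (2 / p)) :
    RecoversPlant r α u v B := by
  refine ⟨h.1, ?_⟩
  have hplant : unvec (α • tensor u v) *ᵥ v = (α * n) • u := by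
    rw [unvec_smul_tensor, vecMulVec_mulVec, ← sqNorm_eq_dotProduct, hv, op_smul_eq_smul,
      smul_smul, mul_comm]
  have hrank : (unvec (α • tensor u v)).rank ≤ r :=
    unvec_smul_tensor α u v ▸ (rank_vecMulVec_le _ _).trans hr
  have hG2 : specNorm (unvec G) ^ 2 ≤ 64 * n := by
    refine (pow_le_pow_left₀ (specNorm_nonneg _) hG 2).trans_eq ?_
    rw [mul_pow, Real.sq_sqrt n.cast_nonneg]
    norm_num
  calc sqNorm ((α * n) • u - B *ᵥ v)
      ≤ 2 * (C ^ 2 + 1) * n ^ (2 / p) * (specNorm (unvec G) ^ 2 * sqNorm v) :=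
        hplant ▸ IsNearOptimal.sqNorm_mulVec_sub_le h hC hp hn hrank v
    _ ≤ 2 * (C ^ 2 + 1) * n ^ (2 / p) * (64 * n * n) := by rw [hv]; gcongr
    _ = (α * n) ^ 2 * (n / 4) := by linear_combination (- (n : ℝ) ^ 2 / 256) * hα

end RecoversPlant

/-- The vectorized matrix `α u vᵀ + G`, in which the plant `(u, v) = x.1` is hidden by the noise
`G = x.2`. -/
def plantedVec {n : ℕ} (α : ℝ) (x : ((Fin n → ℝ) × (Fin n → ℝ)) × (Fin (n * n) → ℝ)) :
    Fin (n * n) → ℝ :=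
  α • tensor x.1.1 x.1.2 + x.2

lemma measurable_plantedVec {n : ℕ} (α : ℝ) : Measurable (plantedVec (n := n) α) :=
  ((continuous_tensor.measurable.comp measurable_fst).const_smul α).add measurable_snd

section Learning

variable {n k t : ℕ} {R α : ℝ}

lemma sum_signal_le (hα : α ^ 2 * (64 * n) = R) (hn : 0 < n) (hR : 2 ≤ R) (j : ℕ) :
    ∑ i ∈ Finset.range j, α ^ 2 * (k * R ^ (i + 1)) ≤ k / n * R ^ (j + 1) / 32 := by
  have hα' : α ^ 2 = R / (64 * n) := by rw [eq_div_iff (by positivity), hα]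
  calc ∑ i ∈ Finset.range j, α ^ 2 * (k * R ^ (i + 1))
      = α ^ 2 * k * ∑ i ∈ Finset.range j, R ^ (i + 1) := by
        rw [Finset.mul_sum]; exact Finset.sum_congr rfl fun i _ => (mul_assoc _ _ _).symm
    _ ≤ α ^ 2 * k * (2 * R ^ j) := by gcongr; exact sum_pow_succ_le hR j
    _ = k / n * R ^ (j + 1) / 32 := by rw [hα']; field_simp; ring

lemma round_exponent_le {x : ℝ} (hx : 1 ≤ x) (hR : 256 ≤ R) (j : ℕ) :
    (x * R ^ (j + 1) / 32 - (x * R ^ (j + 1) / 8 - x / 2)) / 2 ≤ -(j + 1) + -4 := by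
  have hbernoulli : 1 + (j + 1) * (R - 1) ≤ R ^ (j + 1) := by
    exact_mod_cast one_add_mul_sub_le_pow (by linarith : -1 ≤ R) (j + 1)
  have hpow : (256 : ℝ) + 255 * j ≤ R ^ (j + 1) := by
    nlinarith [mul_nonneg (j.cast_nonneg (α := ℝ)) (sub_nonneg.2 hR)]
  nlinarith [mul_nonneg (sub_nonneg.2 hx) (sub_nonneg.2 hpow),
    mul_nonneg (sub_nonneg.2 hx) (j.cast_nonneg (α := ℝ))]

lemma sum_two_mul_expENN_le {s : ℕ → ℝ} (hs : ∀ j, s j ≤ -(j + 1) + -4) (t : ℕ) :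
    ∑ j ∈ Finset.range t, 2 * expENN (s j) ≤ 2 * expENN (-4) :=
  calc ∑ j ∈ Finset.range t, 2 * expENN (s j)
      ≤ ∑ j ∈ Finset.range t, 2 * (expENN (-(j + 1)) * expENN (-4)) := by
        gcongr with j; rw [← expENN_add]; exact expENN_le_expENN (hs j)
    _ = 2 * ((∑ j ∈ Finset.range t, expENN (-(j + 1))) * expENN (-4)) := by
        rw [← Finset.mul_sum, Finset.sum_mul]
    _ ≤ 2 * (1 * expENN (-4)) := by gcongr; exact sum_expENN_neg_add_one_le t
    _ = 2 * expENN (-4) := by rw [one_mul]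

lemma plantLaw_lt_sqNorm_mulVec_smul_tensor_le {Q : Matrix (Fin k) (Fin (n * n)) ℝ}
    (hQ : Q * Qᵀ = 1) (hn : 0 < n) (hα : α ≠ 0) (τ : ℝ) :
    plantLaw n {s | α ^ 2 * τ < sqNorm (Q *ᵥ (α • tensor s.1 s.2))}
      ≤ expENN (-(τ / (8 * n) - k / (2 * n))) := by
  simp_rw [mulVec_smul, sqNorm_smul, mul_lt_mul_iff_right₀ (sq_pos_of_ne_zero hα)]
  simpa using plantLaw_lt_sqNorm_mulVec_tensor_le hn hQ τ

lemma eight_mul_le {r : ℕ} (hn : 0 < n) (hk : n * r ≤ k) (hR : 8 ≤ R)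
    (hRk : R ^ (t + 1) * k ≤ n ^ 2) : 8 * r ≤ n := by
  have hRt : R ≤ R ^ (t + 1) := le_self_pow₀ (by linarith) t.succ_ne_zero
  have hkr : (n : ℝ) * r ≤ k := by exact_mod_cast hk
  have hmul : (n : ℝ) * (8 * r) ≤ n * n := by
    nlinarith [mul_le_mul_of_nonneg_right (hR.trans hRt) (k.cast_nonneg (α := ℝ))]
  exact_mod_cast le_of_mul_le_mul_left hmul (by exact_mod_cast hn)

/-- After `j` rounds the queries have seen a fraction of order `k R ^ j / n²` of the energy of the
plant, except with tiny probability: every round increases it by a factor of at most `R`. -/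
lemma measure_recoversPlant_resp_le {r : ℕ} {Q : QueryMaps (n * n) k t}
    {out : Transcript k t → Matrix (Fin n) (Fin n) ℝ} (hn : 100 ≤ n) (hr : 1 ≤ r)
    (hk : n * r ≤ k) (hR : 256 ≤ R) (hα : α ^ 2 * (64 * n) = R)
    (hRk : R ^ (t + 1) * k ≤ n ^ 2) (hQ : Q.Valid)
    (hout : ∀ i j, Measurable fun h => out h i j) :
    ((plantLaw n).prod (γ (Fin (n * n)))) {x | RecoversPlant r α x.1.1 x.1.2
        (out (QueryMaps.resp Q (plantedVec α x)))} ≤ 4 * expENN (-4) := by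
  have hn0 : 0 < n := by omega
  have hn' : (100 : ℝ) ≤ n := by exact_mod_cast hn
  have hα0 : α ≠ 0 := by rintro rfl; linarith
  have hkn : 1 ≤ (k : ℝ) / n := by
    rw [one_le_div (by linarith)]
    exact_mod_cast (Nat.le_mul_of_pos_right n hr).trans hk
  have hP : MeasurableSet {p : ((Fin n → ℝ) × (Fin n → ℝ)) × Transcript k t |
      RecoversPlant r α p.1.1 p.1.2 (out p.2)} :=
    measurableSet_recoversPlant (by fun_prop) (by fun_prop) fun i j =>
      (hout i j).comp measurable_snd
  refine (QueryMaps.measure_resp_mem_le (a := fun s => α • tensor s.1 s.2)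
    (τ := fun j => α ^ 2 * (k * R ^ (j + 1)))
    (ℓ := fun j => k * R ^ (j + 1) / (8 * n) - k / (2 * n)) (L := n / 8)
    (plantLaw n) hQ (continuous_tensor.measurable.const_smul α) hP
    (fun j q hq => plantLaw_lt_sqNorm_mulVec_smul_tensor_le hq hn0 hα0 _)
    fun h => plantLaw_recoversPlant_le (eight_mul_le hn0 hk (by linarith) hRk) hn0 hα0
      (out h)).trans ?_
  have hsum := sum_signal_le (k := k) hα hn0 (by linarith)
  have hround (j : ℕ) : (∑ i ∈ Finset.range j, α ^ 2 * (k * R ^ (i + 1))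
      - (k * R ^ (j + 1) / (8 * n) - k / (2 * n))) / 2 ≤ -(j + 1) + -4 := by
    refine le_trans ?_ (round_exponent_le hkn hR j)
    refine div_le_div_of_nonneg_right (sub_le_sub (hsum j) (le_of_eq ?_)) zero_le_two
    field_simp
  have hfinal : (∑ i ∈ Finset.range t, α ^ 2 * (k * R ^ (i + 1)) - n / 8) / 2 ≤ -4 := by
    have : (k : ℝ) / n * R ^ (t + 1) ≤ n := by
      rw [div_mul_eq_mul_div, div_le_iff₀ (by linarith)]; linarith
    linarith [hsum t]
  calc _ ≤ 2 * expENN (-4) + 2 * expENN (-4) := by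
        gcongr
        exact sum_two_mul_expENN_le hround t
    _ = 4 * expENN (-4) := by rw [← add_mul]; norm_num

end Learning

/-- The averaging step of Yao's principle: the success probability over a random input of a
randomized algorithm is at most that of its best seed. -/
lemma le_measure_add_of_forall_measure_le {Ω X : Type*} [MeasurableSpace Ω] [MeasurableSpace X]
    {μ : Measure Ω} [IsProbabilityMeasure μ] {ν : Measure X} [IsProbabilityMeasure ν]
    {W : Set (Ω × X)} (hW : MeasurableSet W) {bad : Set X} {q ε : ℝ≥0∞} (hq : q ≤ 1)
    (hgood : ∀ᵐ x ∂ν, x ∉ bad → q ≤ μ {ω | (ω, x) ∈ W})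
    (hseed : ∀ ω, ν {x | (ω, x) ∈ W} ≤ ε) : q ≤ ν bad + ε := by
  have hbad := measurableSet_toMeasurable ν bad
  calc q = ∫⁻ _, q ∂ν := by simp
    _ ≤ ∫⁻ x, ((toMeasurable ν bad).indicator 1 x + μ {ω | (ω, x) ∈ W}) ∂ν := by
        refine lintegral_mono_ae (hgood.mono fun x hx => ?_)
        by_cases hxb : x ∈ toMeasurable ν bad
        · exact le_add_right (by simpa [hxb] using hq)
        · exact le_add_left (hx fun h => hxb (subset_toMeasurable ν bad h))
    _ = ν bad + ∫⁻ x, μ {ω | (ω, x) ∈ W} ∂ν := by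
        rw [lintegral_add_left (measurable_one.indicator hbad), lintegral_indicator_one hbad,
          measure_toMeasurable]
    _ = ν bad + ∫⁻ ω, ν {x | (ω, x) ∈ W} ∂μ := by
        congr 1
        exact (Measure.prod_apply_symm hW).symm.trans (Measure.prod_apply hW)
    _ ≤ ν bad + ∫⁻ _, ε ∂μ := by gcongr with ω; exact hseed ω
    _ = ν bad + ε := by simp

lemma stdGaussian_eight_mul_sqrt_lt_specNorm_le {n : ℕ} (hn : 2 ≤ n) :
    γ (Fin (n * n)) {G | 8 * √n < specNorm (unvec G)} ≤ expENN (-4) := by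
  have hn' : (2 : ℝ) ≤ n := by exact_mod_cast hn
  calc γ (Fin (n * n)) {G | 8 * √n < specNorm (unvec G)}
      ≤ 2 ^ (n + 1) * expENN (n / 2 - (8 * √n) ^ 2 / 16) :=
        stdGaussian_lt_specNorm_unvec_le n (by positivity)
    _ ≤ expENN ↑(n + 1) * expENN (n / 2 - 4 * n) := by
        refine mul_le_mul' (two_pow_le_expENN (n + 1)) (expENN_le_expENN ?_)
        rw [mul_pow, Real.sq_sqrt n.cast_nonneg]
        linarith
    _ ≤ expENN (-4) := by
        rw [← expENN_add]
        exact expENN_le_expENN (by push_cast; linarith)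

/-- A randomized adaptive algorithm with seed distributed according to `μ` that makes `t` rounds
of `k` exact linear measurements of an `n × n` matrix and, on every input, outputs with
probability at least `q` a Schatten-`p` rank-`r` approximation that is optimal up to the
factor `C`. -/
structure IsApproximator {Ω : Type*} [MeasurableSpace Ω] {n k t : ℕ} (C : ℝ) (r : ℕ) (p : ℝ)
    (q : ℝ≥0∞) (μ : Measure Ω) (Q : Ω → QueryMaps (n * n) k t)
    (out : Ω → Transcript k t → Matrix (Fin n) (Fin n) ℝ) : Prop where
  valid : ∀ ω, (Q ω).Valid
  measurable_query : QueryMaps.IsMeasurableFamily Q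
  measurable_out : ∀ i j, Measurable fun x : Ω × Transcript k t => out x.1 x.2 i j
  le_success : ∀ A, q ≤ μ {ω | IsNearOptimal C r p A
    (out ω (QueryMaps.resp (Q ω) (_root_.vec n A)))}

/-- The factor by which a round can increase the energy of the plant seen by the queries; its
dependence on `n` is the price of comparing Schatten-`p` with operator norms. -/
def growth (C : ℝ) (n : ℕ) (p : ℝ) : ℝ := 32768 * (C ^ 2 + 1) * n ^ (2 / p)

section growth

variable {C p : ℝ} {n : ℕ}

lemma le_growth (hn : 0 < n) (hp : 0 < p) : 32768 ≤ growth C n p := by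
  have hrpow : 1 ≤ (n : ℝ) ^ (2 / p) := Real.one_le_rpow (by exact_mod_cast hn) (by positivity)
  rw [growth, mul_assoc]
  exact le_mul_of_one_le_right (by norm_num) (one_le_mul_of_one_le_of_one_le (by nlinarith) hrpow)

lemma two_le_log_growth_const (C : ℝ) : 2 ≤ Real.log (32768 * (C ^ 2 + 1)) := by
  rw [Real.le_log_iff_exp_le (by positivity)]
  calc Real.exp 2 = Real.exp 1 ^ 2 := by rw [← Real.exp_nat_mul]; norm_num
    _ ≤ 3 ^ 2 := by gcongr; exact Real.exp_one_lt_three.le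
    _ ≤ 32768 * (C ^ 2 + 1) := by nlinarith [sq_nonneg C]

lemma log_growth_le (hn : 0 < n) (hp : 0 < p) :
    Real.log (growth C n p) ≤ Real.log (32768 * (C ^ 2 + 1)) * (1 + 1 / p * Real.log n) := by
  have hn' : (1 : ℝ) ≤ n := by exact_mod_cast hn
  rw [growth, Real.log_mul (by positivity) (by positivity), Real.log_rpow (by positivity)]
  have : 0 ≤ 1 / p * Real.log n := mul_nonneg (by positivity) (Real.log_nonneg hn')
  calc _ = Real.log (32768 * (C ^ 2 + 1)) + 2 * (1 / p * Real.log n) := by ring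
    _ ≤ Real.log (32768 * (C ^ 2 + 1))
          + Real.log (32768 * (C ^ 2 + 1)) * (1 / p * Real.log n) := by
        gcongr; exact two_le_log_growth_const C
    _ = _ := by ring

end growth

namespace IsApproximator

variable {Ω : Type*} [MeasurableSpace Ω] {μ : Measure Ω}
  {n r k t : ℕ} {C p : ℝ} {q : ℝ≥0∞} {Q : Ω → QueryMaps (n * n) k t}
  {out : Ω → Transcript k t → Matrix (Fin n) (Fin n) ℝ}

lemma measurableSet_recoversPlant (h : IsApproximator C r p q μ Q out) (α : ℝ) :
    MeasurableSet {z : Ω × ((Fin n → ℝ) × (Fin n → ℝ)) × (Fin (n * n) → ℝ) |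
      RecoversPlant r α z.2.1.1 z.2.1.2
        (out z.1 (QueryMaps.resp (Q z.1) (plantedVec α z.2)))} := by
  have hresp : Measurable fun z : Ω × ((Fin n → ℝ) × (Fin n → ℝ)) × (Fin (n * n) → ℝ) =>
      QueryMaps.resp (Q z.1) (plantedVec α z.2) :=
    h.measurable_query.resp measurable_fst ((measurable_plantedVec α).comp measurable_snd)
  exact _root_.measurableSet_recoversPlant
    (u := fun z : Ω × ((Fin n → ℝ) × (Fin n → ℝ)) × (Fin (n * n) → ℝ) => z.2.1.1)
    (measurable_fst.comp (measurable_fst.comp measurable_snd))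
    (measurable_snd.comp (measurable_fst.comp measurable_snd))
    fun i j => (h.measurable_out i j).comp (measurable_fst.prodMk hresp)

lemma le_measure_recoversPlant (h : IsApproximator C r p q μ Q out) (hC : 0 ≤ C) (hp : 0 < p)
    (hn : 0 < n) (hr : 1 ≤ r) {α : ℝ} (hα : α ^ 2 * (64 * n) = growth C n p)
    {x : ((Fin n → ℝ) × (Fin n → ℝ)) × (Fin (n * n) → ℝ)} (hv : sqNorm x.1.2 = n)
    (hG : specNorm (unvec x.2) ≤ 8 * √n) :
    q ≤ μ {ω | RecoversPlant r α x.1.1 x.1.2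
      (out ω (QueryMaps.resp (Q ω) (plantedVec α x)))} := by
  have hsuccess := h.le_success (unvec (plantedVec α x))
  simp only [vec_unvec] at hsuccess
  exact hsuccess.trans <| measure_mono fun ω hω =>
    IsNearOptimal.recoversPlant hω hC hp hn hr hv hG hα

lemma measurable_out_seed (h : IsApproximator C r p q μ Q out) (ω : Ω) (i j : Fin n) :
    Measurable fun r => out ω r i j :=
  (h.measurable_out i j).comp measurable_prodMk_left

variable [IsProbabilityMeasure μ]

lemma le_one (h : IsApproximator C r p q μ Q out) : q ≤ 1 := (h.le_success 0).trans prob_le_one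

lemma rounds_pos (h : IsApproximator C r p q μ Q out) (hC : 0 ≤ C) (hp : 0 < p) (hn : 0 < n)
    (hr : 1 ≤ r) (hq : 1 / 2 < q) : 0 < t := by
  rcases Nat.eq_zero_or_pos t with rfl | ht
  · exfalso
    let A : Matrix (Fin n) (Fin n) ℝ := vecMulVec 1 1
    have hA : A.rank ≤ r := (rank_vecMulVec_le _ _).trans hr
    have hAij (i j) : A i j = 1 := by simp [A]
    let i₀ : Fin n := ⟨0, hn⟩
    let S : Set Ω := {ω | out ω Fin.elim0 i₀ i₀ = 0}
    have hS : MeasurableSet S :=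
      measurableSet_eq_fun ((h.measurable_out i₀ i₀).comp measurable_prodMk_right) measurable_const
    have hresp (ω : Ω) (a : Fin (n * n) → ℝ) : QueryMaps.resp (Q ω) a = Fin.elim0 :=
      Subsingleton.elim _ _
    have hzero : q ≤ μ S := (h.le_success 0).trans <| measure_mono fun ω hω => by
      have := IsNearOptimal.eq_of_rank_le hω hC hp hn (by simp)
      simp [S, ← hresp ω (_root_.vec n 0), this]
    have hone : q ≤ μ Sᶜ := (h.le_success A).trans <| measure_mono fun ω hω => by
      have := IsNearOptimal.eq_of_rank_le hω hC hp hn hA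
      simp [S, ← hresp ω (_root_.vec n A), this, hAij]
    have hsum : 1 / 2 + 1 / 2 < q + q := ENNReal.add_lt_add hq hq
    rw [ENNReal.add_halves, ← measure_univ (μ := μ), ← measure_add_measure_compl hS] at hsum
    exact hsum.not_ge (add_le_add hzero hone)
  · exact ht

theorem sq_lt_growth_pow_mul (h : IsApproximator C r p q μ Q out) (hC : 0 ≤ C) (hp : 0 < p)
    (hn : 100 ≤ n) (hr : 1 ≤ r) (hk : n * r ≤ k) (hq : 1 / 2 < q) :
    (n : ℝ) ^ 2 < growth C n p ^ (t + 1) * k := by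
  by_contra! hgk
  have hn0 : 0 < n := by omega
  have hR : 256 ≤ growth C n p := by linarith [le_growth (C := C) hn0 hp]
  obtain ⟨α, hα⟩ : ∃ α : ℝ, α ^ 2 * (64 * n) = growth C n p :=
    ⟨√(growth C n p / (64 * n)), by
      rw [Real.sq_sqrt (by positivity), div_mul_cancel₀ _ (by positivity)]⟩
  let ν := (plantLaw n).prod (γ (Fin (n * n)))
  let bad : Set (((Fin n → ℝ) × (Fin n → ℝ)) × (Fin (n * n) → ℝ)) :=
    Set.univ ×ˢ {G | 8 * √n < specNorm (unvec G)}
  have hbad : ν bad ≤ expENN (-4) := by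
    rw [Measure.prod_prod, measure_univ, one_mul]
    exact stdGaussian_eight_mul_sqrt_lt_specNorm_le (by omega)
  have hv : ∀ᵐ x ∂ν, sqNorm x.1.2 = n := Measure.quasiMeasurePreserving_fst.ae
    (Measure.quasiMeasurePreserving_snd.ae (by simpa using ae_sqNorm_signLaw (ι := Fin n)))
  let W : Set (Ω × ((Fin n → ℝ) × (Fin n → ℝ)) × (Fin (n * n) → ℝ)) :=
    {z | RecoversPlant r α z.2.1.1 z.2.1.2 (out z.1 (QueryMaps.resp (Q z.1) (plantedVec α z.2)))}
  have hgood : ∀ᵐ x ∂ν, x ∉ bad → q ≤ μ {ω | (ω, x) ∈ W} := hv.mono fun x hx hxbad =>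
    h.le_measure_recoversPlant hC hp hn0 hr hα hx (by simpa [bad] using hxbad)
  have hseed (ω : Ω) : ν {x | (ω, x) ∈ W} ≤ 4 * expENN (-4) :=
    (measure_recoversPlant_resp_le hn hr hk hR hα hgk (h.valid ω)
      (h.measurable_out_seed ω) :)
  have hle := le_measure_add_of_forall_measure_le (h.measurableSet_recoversPlant α) h.le_one
    hgood hseed
  refine five_mul_expENN_neg_four_lt.not_ge (hq.le.trans ?_)
  calc q ≤ expENN (-4) + 4 * expENN (-4) := hle.trans (by gcongr)
    _ = 5 * expENN (-4) := by ring

end IsApproximator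

theorem schatten_LRA_round_lower_bound_general {C : ℝ} (hC : 0 ≤ C) {q : ℝ≥0∞} (hq : 1 / 2 < q) :
    ∃ c > 0, ∀ {n r k t : ℕ} {p : ℝ}, 100 ≤ n → 1 ≤ r → 0 < p → n * r ≤ k →
      ∀ {Ω : Type*} [MeasurableSpace Ω] {μ : Measure Ω} [IsProbabilityMeasure μ]
        {Q : Ω → QueryMaps (n * n) k t} {out : Ω → Transcript k t → Matrix (Fin n) (Fin n) ℝ},
        IsApproximator C r p q μ Q out →
        c * (Real.log ((n : ℝ) ^ 2 / k) / (1 + 1 / p * Real.log n)) ≤ t := by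
  have hK := two_le_log_growth_const C
  set K := Real.log (32768 * (C ^ 2 + 1))
  refine ⟨(2 * K)⁻¹, by positivity, fun {n r k t p} hn hr hp hk _ _ _ _ _ _ h => ?_⟩
  have hn0 : 0 < n := by omega
  have hk0 : (0 : ℝ) < k := by exact_mod_cast (Nat.mul_pos hn0 hr).trans_le hk
  have ht : (1 : ℝ) ≤ t := by exact_mod_cast h.rounds_pos hC hp hn0 hr hq
  have : 0 ≤ Real.log n := Real.log_natCast_nonneg n
  have hlog : Real.log ((n : ℝ) ^ 2 / k) ≤ (t + 1) * Real.log (growth C n p) := by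
    rw [← Nat.cast_add_one, ← Real.log_pow]
    refine Real.log_le_log (by positivity) ?_
    rw [div_le_iff₀ hk0]
    exact (h.sq_lt_growth_pow_mul hC hp hn hr hk hq).le
  rw [inv_mul_le_iff₀ (by positivity), div_le_iff₀ (by positivity)]
  calc Real.log ((n : ℝ) ^ 2 / k) ≤ (t + 1) * Real.log (growth C n p) := hlog
    _ ≤ (t + t) * (K * (1 + 1 / p * Real.log n)) := by
        gcongr
        · exact Real.log_nonneg (by linarith [le_growth (C := C) hn0 hp])
        · exact log_growth_le hn0 hp
    _ = 2 * K * t * (1 + 1 / p * Real.log n) := by ring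

lemma div_one_add_add_log_log_le {n k : ℕ} (hn : 3 ≤ n) (hk : 0 < k) (hkn : k ≤ n ^ 2) {p : ℝ}
    (hp : 0 < p) :
    Real.log ((n : ℝ) ^ 2 / k) / (1 + 1 / p * Real.log n + Real.log (Real.log n))
      ≤ Real.log ((n : ℝ) ^ 2 / k) / (1 + 1 / p * Real.log n) := by
  have hlogn : 1 ≤ Real.log n := by
    rw [Real.le_log_iff_exp_le (by positivity)]
    exact Real.exp_one_lt_three.le.trans (by exact_mod_cast hn)
  have hratio : 1 ≤ (n : ℝ) ^ 2 / k := by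
    rw [one_le_div (by exact_mod_cast hk)]
    exact_mod_cast hkn
  exact div_le_div_of_nonneg_left (Real.log_nonneg hratio) (by positivity)
    (le_add_of_nonneg_right (Real.log_nonneg hlogn))

/-- Round lower bound for 2-approximate Schatten-`p` norm low-rank approximation. -/
theorem schatten_LRA_round_lower_bound :
    ∃ (c : ℝ) (n₀ : ℕ), 0 < c ∧
      ∀ (n r k t : ℕ) (p : ℝ), n₀ ≤ n → 1 ≤ r → 2 ≤ p → n * r ≤ k → k ≤ n ^ 2 →
      ∀ (Ω : Type) [MeasurableSpace Ω] (μ : Measure Ω) [IsProbabilityMeasure μ]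
        (Qf : Ω → QueryMaps (n * n) k t)
        (out : Ω → (Fin t → Fin k → ℝ) → Matrix (Fin n) (Fin n) ℝ),
        (∀ ω, (Qf ω).Valid) →
        (∀ (j : Fin t) (i : Fin k) (l : Fin (n * n)),
            Measurable fun p : Ω × (Fin (j : ℕ) → Fin k → ℝ) => Qf p.1 j p.2 i l) →
        (∀ i j : Fin n,
            Measurable fun p : Ω × (Fin t → Fin k → ℝ) => out p.1 p.2 i j) →
        (∀ A : Matrix (Fin n) (Fin n) ℝ,
            (99 / 100 : ℝ≥0∞) ≤
              μ {ω | (out ω (QueryMaps.resp (Qf ω) (vec n A))).rank ≤ r ∧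
                    schattenNorm p (A - out ω (QueryMaps.resp (Qf ω) (vec n A)))
                      ≤ 2 * sInf {c' | ∃ X : Matrix (Fin n) (Fin n) ℝ,
                          X.rank ≤ r ∧ c' = schattenNorm p (A - X)}}) →
        c * (Real.log ((n : ℝ) ^ 2 / k) /
            (1 + (1 / p) * Real.log n + Real.log (Real.log n))) ≤ (t : ℝ) := by
  have hhalf : (1 / 2 : ℝ≥0∞) < 99 / 100 := by
    rw [← ENNReal.toReal_lt_toReal (by finiteness) (by finiteness)]
    norm_num
  obtain ⟨c, hc, hbound⟩ := schatten_LRA_round_lower_bound_general zero_le_two hhalf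
  refine ⟨c, 100, hc, fun n r k t p hn hr hp hk hkn Ω _ μ _ Q out hQ hquery hout hsuccess => ?_⟩
  have hk0 : 0 < k := (Nat.mul_pos (by omega) hr).trans_le hk
  calc _ ≤ c * (Real.log ((n : ℝ) ^ 2 / k) / (1 + 1 / p * Real.log n)) :=
        mul_le_mul_of_nonneg_left
          (div_one_add_add_log_log_le (by omega) hk0 hkn (by linarith)) hc.le
    _ ≤ t := hbound hn hr (by linarith) hk ⟨hQ, hquery, hout, hsuccess⟩

end
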